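/- arXiv:1606.06878 — 2 statements merged into one kernel-verified Lean document; each statement's English description precedes it below -/
import Mathlib

section
/- Let d ≥ 1, let ω ∈ ℝ^d be nonresonant, let f : ℝ^d → ℝ be real analytic and 2π-periodic in each coordinate with mean value f₀, let g : ℝ → ℝ be real analytic, and let c₀ ∈ ℝ be a simple zero of g(x) − f₀ (i.e. g(c₀) = f₀ and g'(c₀) ≠ 0). Then there exists ε₀ > 0 such that for every ε with 0 < |ε| < ε₀ there is a function X_ε : ℝ^d → ℝ, real analytic and 2π-periodic in each coordinate, such that the function x(t) = c₀ + X_ε(ωt) satisfies ε x''(t) + x'(t) + ε g(x(t)) = ε f(ωt) for all t ∈ ℝ; moreover sup_{ψ∈ℝ^d} |X_ε(ψ)| → 0 as ε → 0. -/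
open MeasureTheory Filter
open scoped Topology NNReal ENNReal

/-- local uniform bounds on the Taylor coefficients of an analytic function -/
lemma rs_local_bound {E : Type*} [NormedAddCommGroup E] [NormedSpace ℝ E]
    (f : E → ℝ) (x₀ : E) (hf : AnalyticAt ℝ f x₀) :
    ∃ δ > (0:ℝ), ∃ C > (0:ℝ), ∀ x, ‖x - x₀‖ < δ →
      (∀ n : ℕ, ‖((n.factorial : ℝ)⁻¹) • iteratedFDeriv ℝ n f x‖ * δ ^ n ≤ C) ∧
      (∀ h : E, ‖h‖ < δ →
        HasSum (fun n : ℕ => ((n.factorial : ℝ)⁻¹) • iteratedFDeriv ℝ n f x fun _ => h)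
          (f (x + h))) := by
  obtain ⟨p, r, hp⟩ := hf
  obtain ⟨δ, hδ0, hδ⟩ : ∃ δ : ℝ≥0, 0 < δ ∧ (δ : ℝ≥0∞) + δ < r := by
    obtain ⟨s, hs0, hs⟩ := ENNReal.lt_iff_exists_nnreal_btwn.1 hp.r_pos
    refine ⟨s / 2, ?_, ?_⟩
    · have : (0:ℝ≥0) < s := by exact_mod_cast hs0
      positivity
    · rw [← ENNReal.coe_add, add_halves]; exact hs
  have hδr : (δ : ℝ≥0∞) + δ < p.radius := hδ.trans_le hp.r_le
  have hsum := p.changeOriginSeries_summable_aux₁ hδr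
  set C : ℝ≥0 := ∑' s : Σ k l : ℕ, { s : Finset (Fin (k + l)) // s.card = l },
      ‖p (s.1 + s.2.1)‖₊ * δ ^ s.2.1 * δ ^ s.1 with hC
  refine ⟨δ, by exact_mod_cast hδ0, C + 1, by positivity, fun x hx => ?_⟩
  set y := x - x₀ with hy
  have hyδ : ‖y‖₊ < δ := by exact_mod_cast hx
  have hyr' : (‖y‖₊ : ℝ≥0∞) + δ < r := lt_of_le_of_lt (by gcongr) hδ
  have hyr : (‖y‖₊ : ℝ≥0∞) < r := lt_of_le_of_lt le_self_add hyr'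
  have hq := hp.changeOrigin hyr
  have hxy : x₀ + y = x := by simp [hy]
  rw [hxy] at hq
  refine ⟨fun n => ?_, fun h hh => ?_⟩
  · have h1 : ‖((n.factorial : ℝ)⁻¹) • iteratedFDeriv ℝ n f x‖ ≤ ‖p.changeOrigin y n‖ := by
      refine ContinuousMultilinearMap.opNorm_le_bound (by positivity) fun v => ?_
      rw [smul_apply, hq.iteratedFDeriv_eq_sum_of_completeSpace, norm_smul]
      have : ‖∑ σ : Equiv.Perm (Fin n), (p.changeOrigin y n) (fun i => v (σ i))‖ ≤
          n.factorial * (‖p.changeOrigin y n‖ * ∏ i, ‖v i‖) := by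
        refine (norm_sum_le _ _).trans ?_
        refine (Finset.sum_le_card_nsmul _ _ (‖p.changeOrigin y n‖ * ∏ i, ‖v i‖) ?_).trans ?_
        · intro σ _
          refine (ContinuousMultilinearMap.le_opNorm _ _).trans_eq ?_
          rw [Equiv.prod_comp σ (fun i => ‖v i‖)]
        · simp [Fintype.card_perm]
      have hn : (0:ℝ) < n.factorial := by exact_mod_cast n.factorial_pos
      rw [norm_inv, Real.norm_natCast, inv_mul_le_iff₀ hn]
      exact this
    have h2 : ‖p.changeOrigin y n‖₊ * δ ^ n ≤ C := by
      have h3 := p.nnnorm_changeOrigin_le n (x := y) (hyr.trans_le hp.r_le)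
      have h4 := NNReal.summable_sigma.1 hsum
      calc ‖p.changeOrigin y n‖₊ * δ ^ n
          ≤ (∑' s : Σ l : ℕ, { s : Finset (Fin (n + l)) // s.card = l },
              ‖p (n + s.1)‖₊ * δ ^ s.1) * δ ^ n := by
            gcongr
            refine h3.trans ?_
            refine Summable.tsum_le_tsum (fun s => by gcongr) ?_ ?_
            · exact p.changeOriginSeries_summable_aux₂ (hyr.trans_le hp.r_le) n
            · exact p.changeOriginSeries_summable_aux₂ (lt_of_le_of_lt le_self_add hδr) n
        _ = ∑' s : Σ l : ℕ, { s : Finset (Fin (n + l)) // s.card = l },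
              ‖p (n + s.1)‖₊ * δ ^ s.1 * δ ^ n := by rw [NNReal.tsum_mul_right]
        _ ≤ C := by
            rw [hC, hsum.tsum_sigma' (fun k => h4.1 k)]
            exact h4.2.le_tsum n (fun _ _ => zero_le)
    have h2' : ‖p.changeOrigin y n‖ * (δ:ℝ) ^ n ≤ C := by exact_mod_cast h2
    calc _ ≤ ‖p.changeOrigin y n‖ * (δ:ℝ) ^ n := by gcongr
      _ ≤ C + 1 := by linarith
  · apply hq.hasSum_iteratedFDeriv
    rw [Metric.mem_eball, edist_zero_right, lt_tsub_iff_left]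
    refine lt_trans ?_ hyr'
    have : ‖h‖₊ < δ := by exact_mod_cast hh
    exact ENNReal.add_lt_add_left (by simp) (by rw [enorm_eq_nnnorm]; exact_mod_cast this)

/-- gluing Taylor expansions over a compact parameter space -/
lemma rs_analytic_of_unif {E K : Type*} [NormedAddCommGroup E] [NormedSpace ℝ E]
    [TopologicalSpace K] [CompactSpace K]
    (G : E → C(K, ℝ)) (P : K → (n : ℕ) → E [×n]→L[ℝ] ℝ)
    (hPc : ∀ n (v : Fin n → E), Continuous fun k => P k n v) (δ C : ℝ) (hδ : 0 < δ) (hC : 0 < C)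
    (hb : ∀ k n, ‖P k n‖ * δ ^ n ≤ C)
    (hs : ∀ k h, ‖h‖ < δ → HasSum (fun n => P k n fun _ => h) (G h k)) :
    AnalyticAt ℝ G 0 := by
  have hb' : ∀ k n, ‖P k n‖ ≤ C / δ ^ n := fun k n => by
    rw [le_div_iff₀ (by positivity)]; exact hb k n
  have hcont : ∀ n (v : Fin n → E), Continuous fun k => P k n v := hPc
  have hbound : ∀ n (v : Fin n → E),
      ‖(⟨fun k => P k n v, hcont n v⟩ : C(K, ℝ))‖ ≤ C / δ ^ n * ∏ i, ‖v i‖ := by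
    intro n v
    rw [ContinuousMap.norm_le _ (by positivity)]
    intro k
    exact (ContinuousMultilinearMap.le_opNorm _ _).trans (by gcongr; exact hb' k n)
  let p : FormalMultilinearSeries ℝ E C(K, ℝ) := fun n =>
    MultilinearMap.mkContinuous
      { toFun := fun v => (⟨fun k => P k n v, hcont n v⟩ : C(K, ℝ))
        map_update_add' := by
          intro _ v i a b; ext k
          simp
        map_update_smul' := by
          intro _ v i a b; ext k
          simp } (C / δ ^ n) (hbound n)
  have hpapp : ∀ n v k, p n v k = P k n v := fun n v k => rfl
  have hpn : ∀ n, ‖p n‖ ≤ C / δ ^ n := fun n =>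
    MultilinearMap.mkContinuous_norm_le _ (by positivity) _
  have hrad : ENNReal.ofReal δ ≤ p.radius := by
    have := p.le_radius_of_bound (r := δ.toNNReal) C (fun n => by
      rw [Real.coe_toNNReal _ hδ.le]
      calc ‖p n‖ * δ ^ n ≤ (C / δ ^ n) * δ ^ n := by gcongr; exact hpn n
        _ = C := by field_simp)
    exact this
  refine ⟨p, ENNReal.ofReal δ, hrad, by simpa using hδ, ?_⟩
  intro h hh
  rw [zero_add]
  have hh' : ‖h‖ < δ := by
    rw [Metric.mem_eball, edist_zero_right, ← ofReal_norm] at hh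
    exact (ENNReal.ofReal_lt_ofReal_iff hδ).1 hh
  have hsm : Summable fun n => p n fun _ => h := by
    apply Summable.of_norm
    exact p.summable_norm_apply (x := h) (Metric.eball_subset_eball hrad hh)
  have hS := hsm.hasSum
  have : ∑' n, (p n fun _ => h) = G h := by
    ext k
    have h1 := hS.map (ContinuousMap.evalCLM ℝ k : C(K, ℝ) →L[ℝ] ℝ)
      (ContinuousMap.evalCLM ℝ k : C(K, ℝ) →L[ℝ] ℝ).continuous
    exact h1.unique (hs k h hh')
  rw [← this]; exact hS

lemma rs_translate_analytic {E K : Type*} [NormedAddCommGroup E] [NormedSpace ℝ E]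
    [TopologicalSpace K] [CompactSpace K] [AddCommGroup K] [IsTopologicalAddGroup K]
    (q : E →+ K) (hq : IsOpenQuotientMap q) (F : C(K, ℝ))
    (hF : ∀ x, AnalyticAt ℝ (fun y => F (q y)) x) :
    AnalyticAt ℝ (fun h : E => F.comp (ContinuousMap.addRight (q h))) 0 := by
  set f : E → ℝ := fun y => F (q y) with hfdef
  have hinv : ∀ n x x', q x = q x' → iteratedFDeriv ℝ n f x = iteratedFDeriv ℝ n f x' := by
    intro n x x' h
    have : f = fun z => f (z + (x' - x)) := by
      funext z; simp [hfdef, h]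
    conv_lhs => rw [this]
    rw [iteratedFDeriv_comp_add_right]; simp
  have hcd : ContDiff ℝ ⊤ f := contDiff_iff_contDiffAt.2 fun x => (hF x).contDiffAt
  set s := Function.surjInv hq.surjective with hsdef
  have hqs : ∀ k, q (s k) = k := Function.surjInv_eq hq.surjective
  let P : K → (n : ℕ) → E [×n]→L[ℝ] ℝ := fun k n =>
    ((n.factorial : ℝ)⁻¹) • iteratedFDeriv ℝ n f (s k)
  have hPq : ∀ x n, P (q x) n = ((n.factorial : ℝ)⁻¹) • iteratedFDeriv ℝ n f x := by
    intro x n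
    simp only [P]; rw [hinv n _ x (hqs _)]
  have key : ∃ δ > (0:ℝ), ∃ C > (0:ℝ), ∀ k ∈ (Set.univ : Set K),
      (∀ n, ‖P k n‖ * δ ^ n ≤ C) ∧
      (∀ h, ‖h‖ < δ → HasSum (fun n => P k n fun _ => h)
        (F.comp (ContinuousMap.addRight (q h)) k)) := by
    refine isCompact_univ.induction_on (p := fun S : Set K => ∃ δ > (0:ℝ), ∃ C > (0:ℝ), ∀ k ∈ S,
      (∀ n, ‖P k n‖ * δ ^ n ≤ C) ∧
      (∀ h, ‖h‖ < δ → HasSum (fun n => P k n fun _ => h)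
        (F.comp (ContinuousMap.addRight (q h)) k))) ?_ ?_ ?_ ?_
    · exact ⟨1, one_pos, 1, one_pos, by simp⟩
    · rintro S T hST ⟨δ, hδ, C, hC, h⟩
      exact ⟨δ, hδ, C, hC, fun k hk => h k (hST hk)⟩
    · rintro S T ⟨δ, hδ, C, hC, h⟩ ⟨δ', hδ', C', hC', h'⟩
      refine ⟨min δ δ', lt_min hδ hδ', max C C', lt_max_of_lt_left hC, ?_⟩
      rintro k (hk | hk)
      · refine ⟨fun n => ?_, fun y hy => (h k hk).2 y (hy.trans_le (min_le_left _ _))⟩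
        refine le_trans ?_ (((h k hk).1 n).trans (le_max_left _ _))
        have := lt_min hδ hδ'
        gcongr; exact min_le_left _ _
      · refine ⟨fun n => ?_, fun y hy => (h' k hk).2 y (hy.trans_le (min_le_right _ _))⟩
        refine le_trans ?_ (((h' k hk).1 n).trans (le_max_right _ _))
        have := lt_min hδ hδ'
        gcongr; exact min_le_right _ _
    · intro k _
      obtain ⟨δ, hδ, C, hC, h⟩ := rs_local_bound f (s k) (hF (s k))
      refine ⟨q '' Metric.ball (s k) δ, mem_nhdsWithin_of_mem_nhds ?_, δ, hδ, C, hC, ?_⟩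
      · have := hq.isOpenMap.image_mem_nhds (Metric.ball_mem_nhds (s k) hδ)
        rwa [hqs] at this
      · rintro _ ⟨x, hx, rfl⟩
        rw [Metric.mem_ball, dist_eq_norm] at hx
        obtain ⟨h1, h2⟩ := h x hx
        refine ⟨fun n => by rw [hPq]; exact h1 n, fun y hy => ?_⟩
        have := h2 y hy
        simp only [hPq]
        simpa [hfdef] using this
  obtain ⟨δ, hδ, C, hC, h⟩ := key
  refine rs_analytic_of_unif _ P ?_ δ C hδ hC (fun k n => (h k trivial).1 n)
    (fun k y hy => (h k trivial).2 y hy)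
  intro n v
  rw [hq.isQuotientMap.continuous_iff]
  have h1 : (fun k => P k n v) ∘ q =
      fun x => ((n.factorial : ℝ)⁻¹) • (iteratedFDeriv ℝ n f x v) := by
    funext x
    simp only [Function.comp, hPq]; rfl
  have h2 : Continuous (iteratedFDeriv ℝ n f) :=
    hcd.continuous_iteratedFDeriv (by exact_mod_cast le_top)
  have h3 : Continuous fun x => iteratedFDeriv ℝ n f x v :=
    (ContinuousMultilinearMap.apply ℝ (fun _ : Fin n => E) ℝ v).continuous.comp h2
  rw [h1]
  simpa [smul_eq_mul] using h3.const_mul ((n.factorial : ℝ)⁻¹)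

lemma rs_nemytskii {K : Type*} [TopologicalSpace K] [CompactSpace K]
    (g : C(ℝ, ℝ)) (c : ℝ) (hg : AnalyticAt ℝ g c) :
    ∃ ρ > (0:ℝ), ∀ u : C(K, ℝ), ‖u‖ < ρ →
      AnalyticAt ℝ (fun u : C(K, ℝ) => g.comp (ContinuousMap.const K c + u)) u := by
  have h0 : AnalyticAt ℝ (fun u : C(K, ℝ) => g.comp (ContinuousMap.const K c + u)) 0 := by
    obtain ⟨p, r, hp⟩ := hg
    obtain ⟨δ, hδ0, hδ⟩ := ENNReal.lt_iff_exists_nnreal_btwn.1 hp.r_pos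
    have hδ0' : (0:ℝ) < δ := by exact_mod_cast hδ0
    obtain ⟨C, hC, hb⟩ := p.norm_mul_pow_le_of_lt_radius (hδ.trans_le hp.r_le)
    have hev : ∀ k : K, ‖(ContinuousMap.evalCLM ℝ k : C(K, ℝ) →L[ℝ] ℝ)‖ ≤ 1 := fun k =>
      ContinuousLinearMap.opNorm_le_bound _ zero_le_one fun u => by
        simpa using u.norm_coe_le_norm k
    refine rs_analytic_of_unif _
      (fun k n => (p n).compContinuousLinearMap fun _ => ContinuousMap.evalCLM ℝ k)
      ?_ δ C hδ0' hC ?_ ?_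
    · intro n v
      have : Continuous fun k : K => fun i => v i k := by fun_prop
      exact (p n).cont.comp this
    · intro k n
      refine le_trans ?_ (hb n)
      gcongr
      refine ((p n).norm_compContinuousLinearMap_le _).trans ?_
      refine mul_le_of_le_one_right (norm_nonneg _) ?_
      exact Finset.prod_le_one (fun _ _ => norm_nonneg _) (fun _ _ => hev k)
    · intro k u hu
      have hk : ‖u k‖ < δ := (u.norm_coe_le_norm k).trans_lt hu
      have := hp.hasSum (y := u k) (by
        rw [Metric.mem_eball, edist_zero_right]
        refine lt_trans ?_ hδ
        rw [enorm_eq_nnnorm]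
        exact_mod_cast hk)
      exact this
  obtain ⟨ρ, hρ, h⟩ := Metric.eventually_nhds_iff.1 h0.eventually_analyticAt
  exact ⟨ρ, hρ, fun u hu => h (by simpa using hu)⟩

lemma rs_fixed {E K : Type*} [NormedAddCommGroup E] [NormedSpace ℝ E]
    [TopologicalSpace K] [CompactSpace K] [AddCommGroup K] [IsTopologicalAddGroup K]
    (q : E →+ K) (hq : IsOpenQuotientMap q)
    (T : C(K, ℝ) →L[ℝ] C(K, ℝ)) (N : C(K, ℝ) → C(K, ℝ))
    (hT : ∀ k u, T (u.comp (ContinuousMap.addRight k)) = (T u).comp (ContinuousMap.addRight k))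
    (hN : ∀ k u, N (u.comp (ContinuousMap.addRight k)) = (N u).comp (ContinuousMap.addRight k))
    (ρ : ℝ) (hρ : 0 < ρ)
    (hL : ∀ u v, ‖u‖ ≤ ρ → ‖v‖ ≤ ρ → ‖T (N u) - T (N v)‖ ≤ 1 / 2 * ‖u - v‖)
    (hN0 : N 0 = 0) (hNa : ∀ u, ‖u‖ < ρ → AnalyticAt ℝ N u)
    (F : C(K, ℝ)) (hF : ∀ x, AnalyticAt ℝ (fun y => F (q y)) x) (hTF : ‖T F‖ < ρ / 2) :
    ∃ u : C(K, ℝ), u = T (F - N u) ∧ ‖u‖ ≤ 2 * ‖T F‖ ∧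
      ∀ x, AnalyticAt ℝ (fun y => u (q y)) x := by
  have hL0 : ∀ u, ‖u‖ ≤ ρ → ‖T (N u)‖ ≤ 1 / 2 * ‖u‖ := fun u hu => by
    have := hL u 0 hu (by simpa using hρ.le)
    simpa [hN0] using this
  let Φ : C(K, ℝ) → C(K, ℝ) := fun u => T (F - N u)
  have hmaps : Set.MapsTo Φ (Metric.closedBall 0 ρ) (Metric.closedBall 0 ρ) := by
    intro u hu
    rw [mem_closedBall_zero_iff] at hu ⊢
    have h1 := hL0 u hu
    have h2 : ‖Φ u‖ ≤ ‖T F‖ + ‖T (N u)‖ := by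
      simp only [Φ, map_sub]; exact norm_sub_le _ _
    linarith
  have hcontr : ContractingWith (1 / 2) (hmaps.restrict Φ _ _) := by
    refine ⟨one_half_lt_one, ?_⟩
    refine LipschitzWith.of_dist_le_mul fun u v => ?_
    have := hL v.1 u.1 (mem_closedBall_zero_iff.1 v.2) (mem_closedBall_zero_iff.1 u.2)
    rw [Subtype.dist_eq, Subtype.dist_eq, dist_eq_norm, dist_eq_norm]
    have h2 : Φ u - Φ v = T (N v) - T (N u) := by simp only [Φ, map_sub]; abel
    rw [Set.MapsTo.val_restrict_apply, Set.MapsTo.val_restrict_apply, h2, norm_sub_rev u.1 v.1]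
    simpa using this
  obtain ⟨u, hu, hfix, -⟩ := ContractingWith.exists_fixedPoint' Metric.isClosed_closedBall.isComplete
    hmaps hcontr (Metric.mem_closedBall_self hρ.le) (edist_ne_top _ _)
  have hu' : ‖u‖ ≤ ρ := mem_closedBall_zero_iff.1 hu
  have hfix' : u = T (F - N u) := hfix.symm
  have hbd : ‖u‖ ≤ 2 * ‖T F‖ := by
    have h1 := hL0 u hu'
    have h2 : ‖u‖ ≤ ‖T F‖ + ‖T (N u)‖ := by
      conv_lhs => rw [hfix', map_sub]
      exact norm_sub_le _ _
    linarith
  have hlt : ‖u‖ < ρ := by linarith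
  refine ⟨u, hfix', hbd, ?_⟩
  -- the local inverse
  have hTN : AnalyticAt ℝ (fun v => T (N v)) u :=
    (T.analyticAt _).comp (hNa u hlt)
  set D := fderiv ℝ (fun v => T (N v)) u with hD
  have hDn : ‖D‖ ≤ 1 / 2 := by
    have hl : LipschitzOnWith (1 / 2) (fun v => T (N v)) (Metric.ball 0 ρ) := by
      refine LipschitzOnWith.of_dist_le_mul fun v hv w hw => ?_
      rw [dist_eq_norm, dist_eq_norm]
      simpa using hL v w (mem_ball_zero_iff.1 hv).le (mem_ball_zero_iff.1 hw).le
    have := norm_fderiv_le_of_lipschitzOn ℝ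
      (Metric.isOpen_ball.mem_nhds (mem_ball_zero_iff.2 hlt)) hl
    simpa using this
  let U : (C(K, ℝ) →L[ℝ] C(K, ℝ))ˣ := Units.oneSub (-D) (by
    have h1 : ‖-D‖ = ‖D‖ := norm_neg D
    exact lt_of_eq_of_lt h1 (by linarith))
  let e : C(K, ℝ) ≃L[ℝ] C(K, ℝ) := ContinuousLinearEquiv.unitsEquiv ℝ _ U
  have he : (e : C(K, ℝ) →L[ℝ] C(K, ℝ)) = ContinuousLinearMap.id ℝ _ + D := by
    ext v : 1
    simp [e, U]
  let Ψ : C(K, ℝ) → C(K, ℝ) := fun v => v + T (N v)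
  have hΨa : AnalyticAt ℝ Ψ u := analyticAt_id.add hTN
  have hΨd : HasFDerivAt Ψ (e : C(K, ℝ) →L[ℝ] C(K, ℝ)) u := by
    rw [he]
    exact (hasFDerivAt_id u).add hTN.differentiableAt.hasFDerivAt
  have hcd : ContDiffAt ℝ ⊤ Ψ u := hΨa.contDiffAt
  have hne : (⊤ : WithTop ℕ∞) ≠ 0 := by simp
  have hst := hcd.hasStrictFDerivAt' hΨd hne
  have hinvA : AnalyticAt ℝ (hcd.localInverse hΨd hne) (Ψ u) :=
    (hcd.to_localInverse hΨd hne).analyticAt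
  have hleft : ∀ᶠ v in 𝓝 u, hcd.localInverse hΨd hne (Ψ v) = v := hst.eventually_left_inverse
  have htr : Continuous fun h : E => u.comp (ContinuousMap.addRight (q h)) := by
    refine ContinuousMap.continuous_of_continuous_uncurry _ ?_
    have := hq.continuous
    simp only [Function.uncurry_def]
    show Continuous fun p : E × K => u (p.2 + q p.1)
    fun_prop
  have hΨtr : ∀ h, Ψ (u.comp (ContinuousMap.addRight (q h))) =
      T (F.comp (ContinuousMap.addRight (q h))) := by
    intro h
    simp only [Ψ]
    rw [hN, hT, hT]
    have : T F = u + T (N u) := by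
      conv_rhs => lhs; rw [hfix']
      simp
    rw [this]; rfl
  have hu0 : u.comp (ContinuousMap.addRight (q 0)) = u := by
    ext k; simp
  have hcomp : AnalyticAt ℝ (fun h : E => hcd.localInverse hΨd hne
      (T (F.comp (ContinuousMap.addRight (q h))))) 0 := by
    have h1 := rs_translate_analytic q hq F hF
    have h2 : AnalyticAt ℝ (fun h : E => T (F.comp (ContinuousMap.addRight (q h)))) 0 :=
      (T.analyticAt _).comp h1
    refine AnalyticAt.comp (g := hcd.localInverse hΨd hne) ?_ h2
    rw [← hΨtr 0, hu0]
    exact hinvA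
  have htrA : AnalyticAt ℝ (fun h : E => u.comp (ContinuousMap.addRight (q h))) 0 := by
    refine hcomp.congr ?_
    have h1 := htr.tendsto 0
    simp only [hu0] at h1
    filter_upwards [h1.eventually hleft] with h hh
    rw [← hΨtr]; exact hh
  intro x
  have h3 : AnalyticAt ℝ (fun h : E => u (q x + q h)) 0 :=
    ((ContinuousMap.evalCLM ℝ (q x) : C(K, ℝ) →L[ℝ] ℝ).analyticAt _).comp htrA
  have h4 : AnalyticAt ℝ (fun y : E => y - x) x := analyticAt_id.sub analyticAt_const
  have h5 := AnalyticAt.fun_comp (g := fun h : E => u (q x + q h)) (f := fun y : E => y - x) (x := x)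
    (by simpa using h3) h4
  refine h5.congr (Eventually.of_forall fun y => ?_)
  simp


lemma rs_exp_int : IntegrableOn (fun s : ℝ => Real.exp (-s)) (Set.Ioi 0) := by
  simpa using integrableOn_exp_neg_Ioi 0

lemma rs_exp_int_bdd {F : Type*} [NormedAddCommGroup F] [NormedSpace ℝ F] (p : ℝ → F)
    (hp : Continuous p) (B : ℝ) (hB : ∀ r, ‖p r‖ ≤ B) :
    IntegrableOn (fun s : ℝ => Real.exp (-s) • p s) (Set.Ioi 0) := by
  refine Integrable.mono' (rs_exp_int.mul_const B) (by fun_prop) (Eventually.of_forall fun s => ?_)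
  rw [norm_smul, Real.norm_eq_abs, Real.abs_exp]
  gcongr; exact hB s

lemma rs_exp_int_norm {F : Type*} [NormedAddCommGroup F] [NormedSpace ℝ F] (p : ℝ → F)
    (B : ℝ) (hB : ∀ r, ‖p r‖ ≤ B) :
    ‖∫ s in Set.Ioi (0:ℝ), Real.exp (-s) • p s‖ ≤ B := by
  refine (norm_integral_le_of_norm_le (rs_exp_int.mul_const B)
    (Eventually.of_forall fun s => ?_)).trans ?_
  · rw [norm_smul, Real.norm_eq_abs, Real.abs_exp]
    gcongr; exact hB s
  · rw [integral_mul_const, integral_exp_neg_Ioi_zero, one_mul]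

lemma rs_avg {K : Type*} [TopologicalSpace K] [CompactSpace K] [AddCommGroup K]
    [IsTopologicalAddGroup K] [FirstCountableTopology K] (κ : ℝ → K) (hκ : Continuous κ) (τ : ℝ) :
    ∃ A : C(K, ℝ) →L[ℝ] C(K, ℝ),
      (∀ P x, A P x = ∫ s in Set.Ioi (0:ℝ), Real.exp (-s) • P (x - κ (τ * s))) ∧
      ∀ P, ‖A P‖ ≤ ‖P‖ := by
  have hc : ∀ P : C(K, ℝ), Continuous fun x : K =>
      ∫ s in Set.Ioi (0:ℝ), Real.exp (-s) • P (x - κ (τ * s)) := by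
    intro P
    refine MeasureTheory.continuous_of_dominated (bound := fun s => Real.exp (-s) * ‖P‖) ?_ ?_ ?_ ?_
    · intro x
      have : Continuous fun s => Real.exp (-s) • P (x - κ (τ * s)) := by fun_prop
      exact this.aestronglyMeasurable
    · intro x
      refine Eventually.of_forall fun s => ?_
      rw [norm_smul, Real.norm_eq_abs, Real.abs_exp]
      gcongr; exact P.norm_coe_le_norm _
    · exact rs_exp_int.mul_const _
    · refine Eventually.of_forall fun s => ?_
      fun_prop
  have hi : ∀ (P : C(K, ℝ)) (x : K), IntegrableOn
      (fun s => Real.exp (-s) • P (x - κ (τ * s))) (Set.Ioi 0) := fun P x =>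
    rs_exp_int_bdd (fun s => P (x - κ (τ * s))) (by fun_prop) ‖P‖ fun _ => P.norm_coe_le_norm _
  let L : C(K, ℝ) →ₗ[ℝ] C(K, ℝ) :=
    { toFun := fun P => ⟨_, hc P⟩
      map_add' := by
        intro P Q; ext x
        simp only [ContinuousMap.coe_mk, ContinuousMap.add_apply]
        rw [← integral_add (hi P x) (hi Q x)]
        simp only [smul_add]
      map_smul' := by
        intro c P; ext x
        simp only [ContinuousMap.coe_mk, ContinuousMap.smul_apply, RingHom.id_apply]
        rw [← integral_smul]
        simp only [smul_comm c] }
  have hb : ∀ P, ‖L P‖ ≤ 1 * ‖P‖ := by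
    intro P
    rw [one_mul, ContinuousMap.norm_le _ (norm_nonneg _)]
    intro x
    exact rs_exp_int_norm _ _ fun _ => P.norm_coe_le_norm _
  exact ⟨L.mkContinuous 1 hb, fun P x => rfl, fun P => by simpa using hb P⟩

lemma rs_avg_deriv (p : ℝ → ℝ) (hp : Continuous p) (B : ℝ) (hB : ∀ r, ‖p r‖ ≤ B)
    (τ : ℝ) (hτ : τ ≠ 0) (t : ℝ) :
    HasDerivAt (fun t => ∫ s in Set.Ioi (0:ℝ), Real.exp (-s) • p (t - τ * s))
      ((p t - ∫ s in Set.Ioi (0:ℝ), Real.exp (-s) • p (t - τ * s)) / τ) t := by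
  set w : ℝ → ℝ := fun r => ∫ s in Set.Ioi (0:ℝ), Real.exp (-s) • p (τ * (r - s)) with hw
  set φ : ℝ → ℝ := fun r => Real.exp r * p (τ * r) with hφ
  have hφc : Continuous φ := by fun_prop
  have hφi : ∀ r, IntegrableOn φ (Set.Iic r) := by
    intro r
    refine Integrable.mono' ((integrableOn_exp_Iic r).mul_const B) (by fun_prop)
      (Eventually.of_forall fun s => ?_)
    rw [norm_mul, Real.norm_eq_abs, Real.abs_exp]
    gcongr; exact hB _
  have hw1 : ∀ r, w r = Real.exp (-r) * ∫ s in Set.Iic r, φ s := by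
    intro r
    rw [← integral_const_mul, integral_Iic_eq_integral_Iio, ← integral_indicator measurableSet_Iio,
      ← integral_sub_left_eq_self _ volume r, hw]
    simp only
    rw [← integral_indicator measurableSet_Ioi]
    refine integral_congr_ae (Eventually.of_forall fun s => ?_)
    by_cases hs : 0 < s
    · simp [Set.indicator, hs, hφ, ← mul_assoc, ← Real.exp_add]
      left; ring
    · simp [Set.indicator, hs]
  have hI : ∀ r, HasDerivAt (fun r => ∫ s in Set.Iic r, φ s) (φ r) r := by
    intro r
    have h1 : (fun r => ∫ s in Set.Iic r, φ s) =
        fun r => (∫ s in Set.Iic 0, φ s) + ∫ s in (0:ℝ)..r, φ s := by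
      funext r
      rw [← intervalIntegral.integral_Iic_sub_Iic (hφi 0) (hφi r)]; ring
    rw [h1]
    have := intervalIntegral.integral_hasDerivAt_right (hφc.intervalIntegrable 0 r)
      hφc.stronglyMeasurable.stronglyMeasurableAtFilter hφc.continuousAt
    exact this.const_add _
  have hwd : ∀ r, HasDerivAt w (p (τ * r) - w r) r := by
    intro r
    have h1 : w = fun r => Real.exp (-r) * ∫ s in Set.Iic r, φ s := funext hw1
    have h2 := ((hasDerivAt_neg r).exp).mul (hI r)
    rw [hw1 r, h1]
    refine h2.congr_deriv ?_
    simp only [hφ]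
    rw [← mul_assoc, ← Real.exp_add]
    simp; ring
  have hu : (fun t => ∫ s in Set.Ioi (0:ℝ), Real.exp (-s) • p (t - τ * s)) =
      fun t => w (t / τ) := by
    funext t
    simp only [hw]
    congr! 4 with s
    field_simp
  have hu' := congrFun hu t
  beta_reduce at hu'
  rw [hu', hu]
  have := (hwd (t / τ)).comp t ((hasDerivAt_id t).div_const τ)
  refine this.congr_deriv ?_
  have : τ * (t / τ) = t := by field_simp
  rw [this]; ring

/-- the covering map of the torus -/
noncomputable def rsQ (d : ℕ) : (Fin d → ℝ) →+ UnitAddTorus (Fin d) where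
  toFun ψ := fun i => ((ψ i / (2 * Real.pi) : ℝ) : UnitAddCircle)
  map_zero' := by funext i; simp
  map_add' := by intro x y; funext i; simp [add_div]

lemma rsQ_quot (d : ℕ) : IsOpenQuotientMap (rsQ d) := by
  have h1 : IsOpenQuotientMap (fun x : ℝ => ((x / (2 * Real.pi) : ℝ) : UnitAddCircle)) := by
    have h2 : IsOpenQuotientMap (fun x : ℝ => (x : UnitAddCircle)) :=
      QuotientAddGroup.isOpenQuotientMap_mk
    have h3 : IsOpenQuotientMap (fun x : ℝ => x / (2 * Real.pi)) :=
      (Homeomorph.mulRight₀ (2 * Real.pi)⁻¹ (by positivity)).isOpenQuotientMap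
    exact h2.comp h3
  exact IsOpenQuotientMap.piMap (fun _ : Fin d => h1)

lemma rsQ_single (d : ℕ) (ψ : Fin d → ℝ) (i : Fin d) :
    rsQ d (ψ + Pi.single i (2 * Real.pi)) = rsQ d ψ := by
  rw [map_add]
  have : rsQ d (Pi.single i (2 * Real.pi)) = 0 := by
    funext j
    by_cases h : j = i
    · subst h
      simp [rsQ, AddCircle.coe_period]
    · simp [rsQ, h]
  rw [this, add_zero]

lemma rsQ_lift (d : ℕ) (f : (Fin d → ℝ) → ℝ) (hf : Continuous f)
    (hfper : ∀ (ψ : Fin d → ℝ) (i : Fin d), f (ψ + Pi.single i (2 * Real.pi)) = f ψ) :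
    ∃ F : C(UnitAddTorus (Fin d), ℝ), ∀ ψ, F (rsQ d ψ) = f ψ := by
  have hz : ∀ (i : Fin d) (n : ℤ) (ψ : Fin d → ℝ),
      f (ψ + n • Pi.single i (2 * Real.pi)) = f ψ := by
    intro i n ψ
    have hp : Function.Periodic f (Pi.single i (2 * Real.pi)) := fun ψ => hfper ψ i
    exact hp.zsmul n ψ
  have hS : ∀ (n : Fin d → ℤ) (S : Finset (Fin d)) (ψ : Fin d → ℝ),
      f (ψ + ∑ i ∈ S, n i • Pi.single i (2 * Real.pi)) = f ψ := by
    intro n S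
    induction S using Finset.induction_on with
    | empty => intro ψ; simp
    | insert a S ha ih =>
      intro ψ
      rw [Finset.sum_insert ha, ← add_assoc, ih, hz]
  have hinv : ∀ x y, rsQ d x = rsQ d y → f x = f y := by
    intro x y h
    have h1 : ∀ i, ∃ n : ℤ, x i = y i + n * (2 * Real.pi) := by
      intro i
      have h2 : ((x i / (2 * Real.pi) : ℝ) : UnitAddCircle) = ((y i / (2 * Real.pi) : ℝ)) :=
        congrFun h i
      rw [← sub_eq_zero, ← AddCircle.coe_sub, AddCircle.coe_eq_zero_iff] at h2
      obtain ⟨n, hn⟩ := h2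
      refine ⟨n, ?_⟩
      have hpi := Real.pi_ne_zero
      simp only [zsmul_eq_mul, mul_one] at hn
      field_simp at hn
      linarith
    choose n hn using h1
    have : x = y + ∑ i, n i • Pi.single i (2 * Real.pi) := by
      funext j
      simp [hn j, Finset.sum_apply, Pi.single_apply]
    rw [this, hS]
  set s := Function.surjInv (rsQ_quot d).surjective with hs
  have hqs : ∀ k, rsQ d (s k) = k := Function.surjInv_eq (rsQ_quot d).surjective
  have hfs : (fun k => f (s k)) ∘ rsQ d = f := by
    funext ψ
    exact hinv _ _ (hqs _)
  refine ⟨⟨fun k => f (s k), ?_⟩, fun ψ => congrFun hfs ψ⟩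
  rw [(rsQ_quot d).isQuotientMap.continuous_iff, hfs]
  exact hf

lemma rs_mode_q (d : ℕ) (n : Fin d → ℤ) (ψ : Fin d → ℝ) :
    UnitAddTorus.mFourier n (rsQ d ψ) = ∏ i, Complex.exp (Complex.I * n i * ψ i) := by
  simp only [UnitAddTorus.mFourier, ContinuousMap.coe_mk, rsQ, AddMonoidHom.coe_mk, ZeroHom.coe_mk]
  refine Finset.prod_congr rfl fun i _ => ?_
  rw [fourier_coe_apply]
  congr 1
  have : (Real.pi : ℂ) ≠ 0 := by exact_mod_cast Real.pi_ne_zero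
  push_cast
  field_simp

lemma rs_mode_add (d : ℕ) (n : Fin d → ℤ) (x y : UnitAddTorus (Fin d)) :
    UnitAddTorus.mFourier n (x + y) = UnitAddTorus.mFourier n x * UnitAddTorus.mFourier n y := by
  simp only [UnitAddTorus.mFourier, ContinuousMap.coe_mk, ← Finset.prod_mul_distrib]
  refine Finset.prod_congr rfl fun i _ => ?_
  simp [fourier_apply, AddCircle.toCircle_add]

/-- mean over the fundamental cube -/
noncomputable def rsMean (d : ℕ) (P : C(UnitAddTorus (Fin d), ℂ)) : ℂ :=
  (((2 * Real.pi) ^ d)⁻¹ : ℝ) •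
    ∫ ψ in Set.Icc (0 : Fin d → ℝ) (fun _ => 2 * Real.pi), P (rsQ d ψ)

lemma rsMean_int (d : ℕ) (P : C(UnitAddTorus (Fin d), ℂ)) :
    IntegrableOn (fun ψ => P (rsQ d ψ)) (Set.Icc (0 : Fin d → ℝ) (fun _ => 2 * Real.pi)) :=
  (P.continuous.comp (rsQ_quot d).continuous).continuousOn.integrableOn_compact isCompact_Icc

lemma rsMean_add (d : ℕ) (P Q : C(UnitAddTorus (Fin d), ℂ)) :
    rsMean d (P + Q) = rsMean d P + rsMean d Q := by
  simp only [rsMean, ContinuousMap.add_apply]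
  rw [integral_add (rsMean_int d P) (rsMean_int d Q), smul_add]

lemma rsMean_smul (d : ℕ) (c : ℂ) (P : C(UnitAddTorus (Fin d), ℂ)) :
    rsMean d (c • P) = c • rsMean d P := by
  simp only [rsMean, ContinuousMap.smul_apply]
  rw [integral_smul, smul_comm]

lemma rs_vol (d : ℕ) :
    volume.real (Set.Icc (0 : Fin d → ℝ) (fun _ => 2 * Real.pi)) = (2 * Real.pi) ^ d := by
  rw [measureReal_def, Real.volume_Icc_pi]
  have : 0 ≤ 2 * Real.pi := by positivity
  simp [ENNReal.toReal_ofReal, Real.pi_nonneg]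

lemma rsMean_norm (d : ℕ) (P : C(UnitAddTorus (Fin d), ℂ)) : ‖rsMean d P‖ ≤ ‖P‖ := by
  have h1 : ‖∫ ψ in Set.Icc (0 : Fin d → ℝ) (fun _ => 2 * Real.pi), P (rsQ d ψ)‖ ≤
      ‖P‖ * (2 * Real.pi) ^ d := by
    rw [← rs_vol d]
    exact norm_setIntegral_le_of_norm_le_const isCompact_Icc.measure_lt_top
      (fun ψ _ => P.norm_coe_le_norm _)
  have hpos : 0 < (2 * Real.pi) ^ d := by positivity
  rw [rsMean, norm_smul, Real.norm_of_nonneg (by positivity), inv_mul_le_iff₀ hpos]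
  exact h1.trans_eq (mul_comm _ _)

lemma rsMean_mode_zero (d : ℕ) : rsMean d (UnitAddTorus.mFourier 0) = 1 := by
  rw [UnitAddTorus.mFourier_zero, rsMean]
  simp only [ContinuousMap.one_apply, integral_const, measureReal_restrict_apply_univ]
  rw [rs_vol, smul_smul, inv_mul_cancel₀ (by positivity), one_smul]

lemma rsMean_mode (d : ℕ) (n : Fin d → ℤ) (hn : n ≠ 0) :
    rsMean d (UnitAddTorus.mFourier n) = 0 := by
  obtain ⟨i, hi⟩ := Function.ne_iff.mp hn
  rw [rsMean]
  simp only [rs_mode_q]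
  rw [← Set.pi_univ_Icc, volume_pi, Measure.restrict_pi_pi]
  rw [integral_fintype_prod_eq_prod (fun i (x : ℝ) => Complex.exp (Complex.I * n i * x))]
  rw [Finset.prod_eq_zero (Finset.mem_univ i), smul_zero]
  have hi' : (n i : ℂ) ≠ 0 := by exact_mod_cast hi
  have hne : Complex.I * n i ≠ 0 := mul_ne_zero Complex.I_ne_zero hi'
  rw [Pi.zero_apply, integral_Icc_eq_integral_Ioc, ← intervalIntegral.integral_of_le (by positivity),
    integral_exp_mul_complex hne]
  have : Complex.exp (Complex.I * n i * ((2 * Real.pi : ℝ) : ℂ)) = 1 := by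
    rw [Complex.exp_eq_one_iff]
    exact ⟨n i, by push_cast; ring⟩
  rw [this]; simp

/-- weighted orbit averages -/
noncomputable def rsOrb (d : ℕ) (ω : Fin d → ℝ) (τ : ℝ) (x : UnitAddTorus (Fin d))
    (P : C(UnitAddTorus (Fin d), ℂ)) : ℂ :=
  ∫ s in Set.Ioi (0:ℝ), Real.exp (-s) • P (x - rsQ d ((τ * s) • ω))

lemma rsOrb_int (d : ℕ) (ω : Fin d → ℝ) (τ : ℝ) (x : UnitAddTorus (Fin d))
    (P : C(UnitAddTorus (Fin d), ℂ)) :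
    IntegrableOn (fun s : ℝ => Real.exp (-s) • P (x - rsQ d ((τ * s) • ω))) (Set.Ioi 0) := by
  refine rs_exp_int_bdd (fun s => P (x - rsQ d ((τ * s) • ω))) ?_ ‖P‖
    fun _ => P.norm_coe_le_norm _
  have := (rsQ_quot d).continuous
  fun_prop

lemma rsOrb_add (d : ℕ) (ω : Fin d → ℝ) (τ : ℝ) (x : UnitAddTorus (Fin d))
    (P Q : C(UnitAddTorus (Fin d), ℂ)) :
    rsOrb d ω τ x (P + Q) = rsOrb d ω τ x P + rsOrb d ω τ x Q := by
  simp only [rsOrb, ContinuousMap.add_apply, smul_add]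
  rw [integral_add (rsOrb_int d ω τ x P) (rsOrb_int d ω τ x Q)]

lemma rsOrb_smul (d : ℕ) (ω : Fin d → ℝ) (τ : ℝ) (x : UnitAddTorus (Fin d)) (c : ℂ)
    (P : C(UnitAddTorus (Fin d), ℂ)) :
    rsOrb d ω τ x (c • P) = c • rsOrb d ω τ x P := by
  simp only [rsOrb, ContinuousMap.smul_apply]
  rw [← integral_smul]
  simp only [smul_comm c]

lemma rsOrb_norm (d : ℕ) (ω : Fin d → ℝ) (τ : ℝ) (x : UnitAddTorus (Fin d))
    (P : C(UnitAddTorus (Fin d), ℂ)) : ‖rsOrb d ω τ x P‖ ≤ ‖P‖ :=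
  rs_exp_int_norm _ _ fun _ => P.norm_coe_le_norm _

lemma rsOrb_mode (d : ℕ) (ω : Fin d → ℝ) (τ : ℝ) (x : UnitAddTorus (Fin d)) (n : Fin d → ℤ) :
    rsOrb d ω τ x (UnitAddTorus.mFourier n) = UnitAddTorus.mFourier n x *
      (1 + Complex.I * τ * (∑ i, ω i * (n i : ℝ) : ℝ))⁻¹ := by
  set σ : ℝ := ∑ i, ω i * (n i : ℝ) with hσ
  set a : ℂ := -(1 + Complex.I * τ * σ) with ha
  have hare : a.re < 0 := by simp [ha]
  have h1 : ∀ s : ℝ, Real.exp (-s) • UnitAddTorus.mFourier n (x - rsQ d ((τ * s) • ω)) =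
      UnitAddTorus.mFourier n x * Complex.exp (a * s) := by
    intro s
    rw [sub_eq_add_neg, ← map_neg, rs_mode_add, rs_mode_q, ← Complex.exp_sum, Complex.real_smul,
      Complex.ofReal_exp, mul_left_comm, ← Complex.exp_add]
    congr 2
    simp only [ha, hσ]
    push_cast
    simp only [Pi.neg_apply, Pi.smul_apply, smul_eq_mul]
    push_cast
    rw [neg_mul, add_mul, Finset.mul_sum, Finset.sum_mul, neg_add, ← Finset.sum_neg_distrib, one_mul]
    congr 1
    refine Finset.sum_congr rfl fun i _ => by ring
  simp only [rsOrb, h1]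
  rw [integral_const_mul, integral_exp_mul_complex_Ioi hare]
  congr 1
  rw [ha, div_neg, neg_div, neg_neg]; simp

lemma rs_equidist (d : ℕ) (ω : Fin d → ℝ)
    (hω : ∀ ν : Fin d → ℤ, ν ≠ 0 → (∑ i, ω i * (ν i : ℝ)) ≠ 0)
    (P : C(UnitAddTorus (Fin d), ℂ)) (η : ℝ) (hη : 0 < η) :
    ∃ M : ℝ, ∀ τ : ℝ, M ≤ |τ| → ∀ x, ‖rsOrb d ω τ x P - rsMean d P‖ ≤ η := by
  have hspan : ∀ P ∈ Submodule.span ℂ (Set.range (UnitAddTorus.mFourier (d := Fin d))),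
      ∀ η > (0:ℝ), ∃ M : ℝ, ∀ τ : ℝ, M ≤ |τ| → ∀ x, ‖rsOrb d ω τ x P - rsMean d P‖ ≤ η := by
    intro P hP
    induction hP using Submodule.span_induction with
    | mem P h =>
      obtain ⟨n, rfl⟩ := h
      intro η hη
      by_cases hn : n = 0
      · subst hn
        refine ⟨0, fun τ _ x => ?_⟩
        rw [rsOrb_mode, rsMean_mode_zero]
        simp [UnitAddTorus.mFourier_zero, hη.le]
      · have hσ := hω n hn
        set σ : ℝ := ∑ i, ω i * (n i : ℝ) with hσd
        refine ⟨1 / (|σ| * η), fun τ hτ x => ?_⟩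
        rw [rsOrb_mode, rsMean_mode d n hn, sub_zero, norm_mul, norm_inv, ← hσd]
        have h1 : ‖UnitAddTorus.mFourier n x‖ ≤ 1 := by
          refine ((UnitAddTorus.mFourier n).norm_coe_le_norm x).trans ?_
          rw [UnitAddTorus.mFourier_norm]
        have hσ0 : 0 < |σ| := abs_pos.2 hσ
        have h2 : 1 / η ≤ ‖1 + Complex.I * τ * (σ : ℂ)‖ := by
          have h3 := Complex.abs_im_le_norm (1 + Complex.I * τ * (σ : ℂ))
          have h4 : (1 + Complex.I * τ * (σ : ℂ)).im = τ * σ := by simp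
          rw [h4, abs_mul] at h3
          refine le_trans ?_ h3
          calc 1 / η = 1 / (|σ| * η) * |σ| := by field_simp
            _ ≤ _ := by gcongr
        have h5 : ‖1 + Complex.I * τ * (σ : ℂ)‖⁻¹ ≤ η := by
          rw [one_div] at h2
          exact inv_le_of_inv_le₀ hη h2
        calc _ ≤ 1 * η := by gcongr
          _ = η := one_mul _
    | zero =>
      intro η hη
      refine ⟨0, fun τ _ x => ?_⟩
      have h1 := rsOrb_norm d ω τ x 0
      have h2 := rsMean_norm d 0
      have h3 := norm_sub_le (rsOrb d ω τ x 0) (rsMean d 0)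
      simp only [norm_zero] at h1 h2
      linarith
    | add P Q _ _ hP hQ =>
      intro η hη
      obtain ⟨M, hM⟩ := hP (η / 2) (by positivity)
      obtain ⟨M', hM'⟩ := hQ (η / 2) (by positivity)
      refine ⟨max M M', fun τ hτ x => ?_⟩
      have h1 := hM τ ((le_max_left _ _).trans hτ) x
      have h2 := hM' τ ((le_max_right _ _).trans hτ) x
      rw [rsOrb_add, rsMean_add, add_sub_add_comm]
      refine (norm_add_le _ _).trans (by linarith)
    | smul c P _ hP =>
      intro η hη
      obtain ⟨M, hM⟩ := hP (η / (‖c‖ + 1)) (by positivity)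
      refine ⟨M, fun τ hτ x => ?_⟩
      rw [rsOrb_smul, rsMean_smul, ← smul_sub, norm_smul]
      calc ‖c‖ * _ ≤ (‖c‖ + 1) * (η / (‖c‖ + 1)) := by
            gcongr
            · linarith
            · exact hM τ hτ x
        _ = η := by field_simp
  have hcl : P ∈ (Submodule.span ℂ
      (Set.range (UnitAddTorus.mFourier (d := Fin d)))).topologicalClosure := by
    rw [UnitAddTorus.span_mFourier_closure_eq_top]; trivial
  have hcl' : P ∈ closure (Submodule.span ℂ
      (Set.range (UnitAddTorus.mFourier (d := Fin d))) : Set C(UnitAddTorus (Fin d), ℂ)) := hcl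
  obtain ⟨Q, hQ, hPQ⟩ := Metric.mem_closure_iff.1 hcl' (η / 3) (by positivity)
  obtain ⟨M, hM⟩ := hspan Q hQ (η / 3) (by positivity)
  refine ⟨M, fun τ hτ x => ?_⟩
  have h1 := hM τ hτ x
  have hP : P = Q + (P - Q) := by abel
  rw [dist_eq_norm] at hPQ
  have h2 := rsOrb_norm d ω τ x (P - Q)
  have h3 := rsMean_norm d (P - Q)
  have h4 : rsOrb d ω τ x P - rsMean d P = (rsOrb d ω τ x Q - rsMean d Q) +
      (rsOrb d ω τ x (P - Q) - rsMean d (P - Q)) := by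
    conv_lhs => rw [hP, rsOrb_add, rsMean_add]
    ring
  rw [h4]
  refine (norm_add_le _ _).trans ?_
  have h5 := norm_sub_le (rsOrb d ω τ x (P - Q)) (rsMean d (P - Q))
  linarith

/-- real version -/
lemma rs_equidist_real (d : ℕ) (ω : Fin d → ℝ)
    (hω : ∀ ν : Fin d → ℤ, ν ≠ 0 → (∑ i, ω i * (ν i : ℝ)) ≠ 0)
    (P : C(UnitAddTorus (Fin d), ℝ))
    (hP : ((2 * Real.pi) ^ d)⁻¹ *
      ∫ ψ in Set.Icc (0 : Fin d → ℝ) (fun _ => 2 * Real.pi), P (rsQ d ψ) = 0)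
    (η : ℝ) (hη : 0 < η) :
    ∃ M : ℝ, ∀ τ : ℝ, M ≤ |τ| → ∀ x,
      ‖∫ s in Set.Ioi (0:ℝ), Real.exp (-s) • P (x - rsQ d ((τ * s) • ω))‖ ≤ η := by
  let Q : C(UnitAddTorus (Fin d), ℂ) := ⟨fun x => (P x : ℂ), by fun_prop⟩
  obtain ⟨M, hM⟩ := rs_equidist d ω hω Q η hη
  refine ⟨M, fun τ hτ x => ?_⟩
  have h1 := hM τ hτ x
  have h2 : rsMean d Q = 0 := by
    have : rsMean d Q = ((((2 * Real.pi) ^ d)⁻¹ *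
      ∫ ψ in Set.Icc (0 : Fin d → ℝ) (fun _ => 2 * Real.pi), P (rsQ d ψ) : ℝ) : ℂ) := by
      rw [Complex.ofReal_mul, ← integral_complex_ofReal, ← Complex.real_smul]; rfl
    rw [this, hP]; simp
  have h3 : rsOrb d ω τ x Q =
      ((∫ s in Set.Ioi (0:ℝ), Real.exp (-s) • P (x - rsQ d ((τ * s) • ω)) : ℝ) : ℂ) := by
    rw [← integral_complex_ofReal, rsOrb]
    simp [Q]
  rw [h2, h3, sub_zero, Complex.norm_real] at h1
  exact h1

lemma rs_root (a ε : ℝ) (hε : 0 < |ε|) (h : 4 * ε ^ 2 * |a| ≤ 1) :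
    ∃ μ : ℝ, μ ≠ 0 ∧ ε * (μ ^ 2 + a) = μ ∧ 1 / (2 * |ε|) ≤ |μ| := by
  have hε0 : ε ≠ 0 := abs_pos.1 hε
  have hd : 0 ≤ 1 - 4 * ε ^ 2 * a := by
    have : 4 * ε ^ 2 * a ≤ 4 * ε ^ 2 * |a| := by gcongr; exact le_abs_self a
    linarith
  set r := Real.sqrt (1 - 4 * ε ^ 2 * a) with hr
  have hr0 : 0 ≤ r := Real.sqrt_nonneg _
  have hr2 : r ^ 2 = 1 - 4 * ε ^ 2 * a := Real.sq_sqrt hd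
  refine ⟨(1 + r) / (2 * ε), by positivity, ?_, ?_⟩
  · field_simp
    linarith
  · rw [abs_div, abs_mul, abs_of_nonneg (by linarith : 0 ≤ 1 + r), abs_two]
    gcongr
    linarith

/-- derivative of an average along the orbit -/
lemma rs_avg_orbit (d : ℕ) (ω : Fin d → ℝ) (τ : ℝ) (hτ : τ ≠ 0)
    (A : C(UnitAddTorus (Fin d), ℝ) →L[ℝ] C(UnitAddTorus (Fin d), ℝ))
    (hA : ∀ P x, A P x = ∫ s in Set.Ioi (0:ℝ), Real.exp (-s) • P (x - rsQ d ((τ * s) • ω)))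
    (P : C(UnitAddTorus (Fin d), ℝ)) (t : ℝ) :
    HasDerivAt (fun t : ℝ => A P (rsQ d (t • ω)))
      ((P (rsQ d (t • ω)) - A P (rsQ d (t • ω))) / τ) t := by
  have hq := (rsQ_quot d).continuous
  have h := rs_avg_deriv (fun r => P (rsQ d (r • ω))) (by fun_prop) ‖P‖
    (fun _ => P.norm_coe_le_norm _) τ hτ t
  have h1 : ∀ t : ℝ, A P (rsQ d (t • ω)) =
      ∫ s in Set.Ioi (0:ℝ), Real.exp (-s) • P (rsQ d ((t - τ * s) • ω)) := by
    intro t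
    rw [hA]
    simp only [sub_smul, map_sub]
  simp only [h1]
  exact h

lemma rs_main (d : ℕ) (ω : Fin d → ℝ)
    (hω : ∀ ν : Fin d → ℤ, ν ≠ 0 → (∑ i, ω i * (ν i : ℝ)) ≠ 0)
    (g : C(ℝ, ℝ)) (c₀ f₀ : ℝ) (hg : AnalyticAt ℝ g c₀) (hzero : g c₀ = f₀)
    (hsimple : deriv g c₀ ≠ 0)
    (F : C(UnitAddTorus (Fin d), ℝ))
    (hF : ∀ x, AnalyticAt ℝ (fun y => F (rsQ d y)) x)
    (hf₀ : f₀ = ((2 * Real.pi) ^ d)⁻¹ *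
      ∫ ψ in Set.Icc (0 : Fin d → ℝ) (fun _ => 2 * Real.pi), F (rsQ d ψ)) :
    ∃ ε₀ > (0:ℝ), ∃ θ : ℝ → ℝ, (∀ η, 0 < θ η) ∧ ∀ ε : ℝ, 0 < |ε| → |ε| < ε₀ →
      ∃ u : C(UnitAddTorus (Fin d), ℝ),
        (∀ x, AnalyticAt ℝ (fun y => u (rsQ d y)) x) ∧
        (∀ t : ℝ, ε * deriv (deriv (fun s : ℝ => c₀ + u (rsQ d (s • ω)))) t
            + deriv (fun s : ℝ => c₀ + u (rsQ d (s • ω))) t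
            + ε * g (c₀ + u (rsQ d (t • ω))) = ε * F (rsQ d (t • ω))) ∧
        ∀ η > 0, |ε| < θ η → ‖u‖ ≤ η := by
  set a := deriv g c₀ with ha
  have ha0 : 0 < |a| := abs_pos.2 hsimple
  have hq := rsQ_quot d
  have hκ : Continuous fun t : ℝ => rsQ d (t • ω) := by
    have := hq.continuous
    fun_prop
  -- centred forcing
  set F' : C(UnitAddTorus (Fin d), ℝ) := F - ContinuousMap.const _ f₀ with hF'
  have hF'a : ∀ x, AnalyticAt ℝ (fun y => F' (rsQ d y)) x := fun x =>
    (hF x).sub analyticAt_const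
  have hF'm : ((2 * Real.pi) ^ d)⁻¹ *
      ∫ ψ in Set.Icc (0 : Fin d → ℝ) (fun _ => 2 * Real.pi), F' (rsQ d ψ) = 0 := by
    have hi : IntegrableOn (fun ψ => F (rsQ d ψ))
        (Set.Icc (0 : Fin d → ℝ) (fun _ => 2 * Real.pi)) :=
      (F.continuous.comp hq.continuous).continuousOn.integrableOn_compact isCompact_Icc
    have hc : IntegrableOn (fun _ : Fin d → ℝ => f₀)
        (Set.Icc (0 : Fin d → ℝ) (fun _ => 2 * Real.pi)) :=
      continuous_const.continuousOn.integrableOn_compact isCompact_Icc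
    simp only [hF', ContinuousMap.sub_apply, ContinuousMap.const_apply]
    rw [integral_sub hi hc, mul_sub, ← hf₀, setIntegral_const, rs_vol, smul_eq_mul, ← mul_assoc,
      inv_mul_cancel₀ (by positivity), one_mul, sub_self]
  -- nonlinearity
  obtain ⟨ρ₁, hρ₁, hGa⟩ := rs_nemytskii (K := UnitAddTorus (Fin d)) g c₀ hg
  obtain ⟨ρ₂, hρ₂, hlip⟩ : ∃ ρ₂ > (0:ℝ), ∀ x y : ℝ, |x| < ρ₂ → |y| < ρ₂ →
      |g (c₀ + x) - g (c₀ + y) - a * (x - y)| ≤ |a| / 2 * |x - y| := by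
    have h1 := hg.hasStrictDerivAt
    have h2 := h1.isLittleO.def (half_pos ha0)
    obtain ⟨ρ, hρ, h3⟩ := Metric.eventually_nhds_iff.1 h2
    refine ⟨ρ, hρ, fun x y hx hy => ?_⟩
    have h4 := @h3 (c₀ + x, c₀ + y) (by
      rw [Prod.dist_eq, max_lt_iff]
      simp [Real.dist_eq, hx, hy])
    have h5 : c₀ + x - (c₀ + y) = x - y := by ring
    simp only [h5, Real.norm_eq_abs] at h4
    simpa [mul_comm] using h4
  set N : C(UnitAddTorus (Fin d), ℝ) → C(UnitAddTorus (Fin d), ℝ) := fun u =>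
    g.comp (ContinuousMap.const _ c₀ + u) - ContinuousMap.const _ f₀ - a • u with hN
  set ρ := min ρ₁ ρ₂ / 2 with hρ
  have hρ0 : 0 < ρ := by positivity
  have hρρ₁ : ρ < ρ₁ := by
    have := min_le_left ρ₁ ρ₂
    rw [hρ]; linarith
  have hρρ₂ : ρ < ρ₂ := by
    have := min_le_right ρ₁ ρ₂
    rw [hρ]; linarith
  have hNL : ∀ u v, ‖u‖ ≤ ρ → ‖v‖ ≤ ρ → ‖N u - N v‖ ≤ |a| / 2 * ‖u - v‖ := by
    intro u v hu hv
    rw [ContinuousMap.norm_le _ (by positivity)]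
    intro x
    have h1 := hlip (u x) (v x) (((u.norm_coe_le_norm x).trans hu).trans_lt hρρ₂)
      (((v.norm_coe_le_norm x).trans hv).trans_lt hρρ₂)
    have h2 : (N u - N v) x = g (c₀ + u x) - g (c₀ + v x) - a * (u x - v x) := by
      simp [hN]; ring
    rw [h2, Real.norm_eq_abs]
    refine h1.trans ?_
    gcongr
    exact (u - v).norm_coe_le_norm x
  have hN0 : N 0 = 0 := by
    ext x; simp [hN, hzero]
  have hNa : ∀ u, ‖u‖ < ρ → AnalyticAt ℝ N u := by
    intro u hu
    refine ((hGa u (hu.trans hρρ₁)).sub analyticAt_const).sub ?_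
    exact (a • ContinuousLinearMap.id ℝ C(UnitAddTorus (Fin d), ℝ)).analyticAt u
  have hNt : ∀ k u, N (u.comp (ContinuousMap.addRight k)) =
      (N u).comp (ContinuousMap.addRight k) := by
    intro k u; ext x; simp [hN]
  -- thresholds
  have hM := rs_equidist_real d ω hω F' hF'm
  have hM' : ∀ η : ℝ, ∃ M : ℝ, 0 < η → ∀ τ : ℝ, M ≤ |τ| → ∀ x,
      ‖∫ s in Set.Ioi (0:ℝ), Real.exp (-s) • F' (x - rsQ d ((τ * s) • ω))‖ ≤ |a| * η / 2 := by
    intro η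
    by_cases hη : 0 < η
    · obtain ⟨M, h⟩ := hM (|a| * η / 2) (by positivity)
      exact ⟨M, fun _ => h⟩
    · exact ⟨0, fun h => absurd h hη⟩
  choose M hMη using hM'
  set θ : ℝ → ℝ := fun η => 1 / (2 * |a| * (|M η| + 1)) with hθ
  have hθ0 : ∀ η, 0 < θ η := fun η => by positivity
  refine ⟨min (θ (ρ / 2)) (1 / (2 * (|a| + 1))), lt_min (hθ0 _) (by positivity), θ, hθ0, ?_⟩
  intro ε hε hεlt
  have hε1 : |ε| < θ (ρ / 2) := hεlt.trans_le (min_le_left _ _)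
  have hε2 : |ε| < 1 / (2 * (|a| + 1)) := hεlt.trans_le (min_le_right _ _)
  have hdisc : 4 * ε ^ 2 * |a| ≤ 1 := by
    rw [lt_div_iff₀ (by positivity)] at hε2
    have h1 : 4 * ε ^ 2 * |a| ≤ (|ε| * (2 * (|a| + 1))) ^ 2 := by
      rw [← sq_abs ε]
      nlinarith [sq_nonneg |ε|, mul_nonneg (sq_nonneg |ε|) ha0.le, mul_nonneg (sq_nonneg |ε|) (sq_nonneg |a|)]
    refine h1.trans ?_
    have h3 : 0 ≤ |ε| * (2 * (|a| + 1)) := by positivity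
    nlinarith
  obtain ⟨μ, hμ0, hμ, hμb⟩ := rs_root a ε hε hdisc
  obtain ⟨A₁, hA₁, hA₁n⟩ := rs_avg (fun t : ℝ => rsQ d (t • ω)) hκ (μ / a)
  obtain ⟨A₂, hA₂, hA₂n⟩ := rs_avg (fun t : ℝ => rsQ d (t • ω)) hκ (1 / μ)
  have hA₁t : ∀ k u, A₁ (u.comp (ContinuousMap.addRight k)) =
      (A₁ u).comp (ContinuousMap.addRight k) := by
    intro k u; ext x
    simp only [hA₁, ContinuousMap.comp_apply, ContinuousMap.coe_addRight, sub_add_eq_add_sub]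
  have hA₂t : ∀ k u, A₂ (u.comp (ContinuousMap.addRight k)) =
      (A₂ u).comp (ContinuousMap.addRight k) := by
    intro k u; ext x
    simp only [hA₂, ContinuousMap.comp_apply, ContinuousMap.coe_addRight, sub_add_eq_add_sub]
  set T : C(UnitAddTorus (Fin d), ℝ) →L[ℝ] C(UnitAddTorus (Fin d), ℝ) :=
    a⁻¹ • (A₂.comp A₁) with hTd
  have hTapp : ∀ u, T u = a⁻¹ • A₂ (A₁ u) := fun u => rfl
  have hTt : ∀ k u, T (u.comp (ContinuousMap.addRight k)) =
      (T u).comp (ContinuousMap.addRight k) := by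
    intro k u
    rw [hTapp, hTapp, hA₁t, hA₂t]; rfl
  have hTn : ∀ u, ‖T u‖ ≤ |a|⁻¹ * ‖A₁ u‖ := by
    intro u
    rw [hTapp, norm_smul, norm_inv, Real.norm_eq_abs]
    gcongr
    exact hA₂n _
  have hTL : ∀ u v, ‖u‖ ≤ ρ → ‖v‖ ≤ ρ → ‖T (N u) - T (N v)‖ ≤ 1 / 2 * ‖u - v‖ := by
    intro u v hu hv
    rw [← map_sub]
    have h1 := hNL u v hu hv
    have h2 := hTn (N u - N v)
    have h3 := hA₁n (N u - N v)
    calc ‖T (N u - N v)‖ ≤ |a|⁻¹ * (|a| / 2 * ‖u - v‖) := by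
          refine h2.trans ?_
          gcongr
          exact h3.trans h1
      _ = 1 / 2 * ‖u - v‖ := by field_simp
  have hTF : ∀ η > 0, |ε| < θ η → ‖T F'‖ ≤ η / 2 := by
    intro η hη hlt
    have h1 : M η ≤ |μ / a| := by
      have h2 : |ε| * (2 * |a| * (|M η| + 1)) < 1 := by
        rwa [hθ, lt_div_iff₀ (by positivity)] at hlt
      have h3 : |M η| + 1 ≤ |μ| / |a| := by
        rw [le_div_iff₀ ha0]
        refine le_trans ?_ hμb
        rw [le_div_iff₀ (by positivity)]
        nlinarith
      rw [abs_div]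
      linarith [le_abs_self (M η)]
    have h4 := hMη η hη (μ / a) h1
    have h5 : ‖A₁ F'‖ ≤ |a| * η / 2 := by
      rw [ContinuousMap.norm_le _ (by positivity)]
      intro x
      rw [hA₁]; exact h4 x
    calc ‖T F'‖ ≤ |a|⁻¹ * (|a| * η / 2) := (hTn F').trans (by gcongr)
      _ = η / 2 := by field_simp
  obtain ⟨u, hu, hun, hua⟩ := rs_fixed (rsQ d) hq T N hTt hNt ρ hρ0 hTL hN0 hNa F' hF'a
    (lt_of_le_of_lt (hTF (ρ / 2) (by positivity) hε1) (by linarith))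
  refine ⟨u, hua, ?_, fun η hη hlt => hun.trans (by linarith [hTF η hη hlt])⟩
  -- the differential equation
  have ha0' : a ≠ 0 := hsimple
  set G := F' - N u with hG
  have hv : ∀ t : ℝ, HasDerivAt (fun t : ℝ => A₁ G (rsQ d (t • ω)))
      ((G (rsQ d (t • ω)) - A₁ G (rsQ d (t • ω))) / (μ / a)) t :=
    rs_avg_orbit d ω (μ / a) (div_ne_zero hμ0 ha0') A₁ hA₁ G
  have hw : ∀ t : ℝ, HasDerivAt (fun t : ℝ => A₂ (A₁ G) (rsQ d (t • ω)))
      ((A₁ G (rsQ d (t • ω)) - A₂ (A₁ G) (rsQ d (t • ω))) / (1 / μ)) t :=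
    rs_avg_orbit d ω (1 / μ) (one_div_ne_zero hμ0) A₂ hA₂ (A₁ G)
  have hux : ∀ x, u x = a⁻¹ * A₂ (A₁ G) x := by
    intro x
    conv_lhs => rw [hu]
    rfl
  have hd1 : ∀ t : ℝ, HasDerivAt (fun s : ℝ => c₀ + u (rsQ d (s • ω)))
      (a⁻¹ * ((A₁ G (rsQ d (t • ω)) - A₂ (A₁ G) (rsQ d (t • ω))) / (1 / μ))) t := by
    intro t
    simp only [hux]
    exact ((hw t).const_mul a⁻¹).const_add c₀
  have hd1' : deriv (fun s : ℝ => c₀ + u (rsQ d (s • ω))) = fun t =>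
      (a⁻¹ * ((A₁ G (rsQ d (t • ω)) - A₂ (A₁ G) (rsQ d (t • ω))) / (1 / μ))) :=
    funext fun t => (hd1 t).deriv
  intro t
  have hd2 := (((hv t).sub (hw t)).div_const (1 / μ)).const_mul a⁻¹
  have hd2' := hd2.deriv
  have hGx : G (rsQ d (t • ω)) = F (rsQ d (t • ω)) - g (c₀ + u (rsQ d (t • ω)))
      + a * u (rsQ d (t • ω)) := by
    simp [hG, hF', hN]; ring
  rw [hd1']
  erw [hd2']
  beta_reduce
  have hg' : g (c₀ + u (rsQ d (t • ω))) = F (rsQ d (t • ω)) + A₂ (A₁ G) (rsQ d (t • ω))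
      - G (rsQ d (t • ω)) := by
    rw [hGx, hux]; field_simp; ring
  rw [hg']
  generalize A₂ (A₁ G) (rsQ d (t • ω)) = w
  generalize A₁ G (rsQ d (t • ω)) = v
  generalize G (rsQ d (t • ω)) = G'
  generalize F (rsQ d (t • ω)) = F''
  have key : ε * (a⁻¹ * (((G' - v) / (μ / a) - (v - w) / (1 / μ)) / (1 / μ))) +
      a⁻¹ * ((v - w) / (1 / μ)) + ε * (F'' + w - G') - ε * F'' =
      a⁻¹ * (v - w) * (μ - ε * (μ ^ 2 + a)) := by
    field_simp
    ring
  rw [hμ, sub_self, mul_zero] at key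
  linarith

theorem response_solution_exists
    (d : ℕ) (hd : 1 ≤ d) (ω : Fin d → ℝ)
    (hω : ∀ ν : Fin d → ℤ, ν ≠ 0 → (∑ i, ω i * (ν i : ℝ)) ≠ 0)
    (f : (Fin d → ℝ) → ℝ) (g : ℝ → ℝ)
    (hf : ∀ ψ : Fin d → ℝ, AnalyticAt ℝ f ψ)
    (hfper : ∀ (ψ : Fin d → ℝ) (i : Fin d), f (ψ + Pi.single i (2 * Real.pi)) = f ψ)
    (hg : ∀ x : ℝ, AnalyticAt ℝ g x)
    (f₀ : ℝ)
    (hf₀ : f₀ = ((2 * Real.pi) ^ d)⁻¹ *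
      ∫ ψ in Set.Icc (0 : Fin d → ℝ) (fun _ => 2 * Real.pi), f ψ)
    (c₀ : ℝ) (hzero : g c₀ = f₀) (hsimple : deriv g c₀ ≠ 0) :
    ∃ ε₀ > (0 : ℝ), ∃ X : ℝ → (Fin d → ℝ) → ℝ,
      (∀ ε : ℝ, 0 < |ε| → |ε| < ε₀ →
        (∀ ψ : Fin d → ℝ, AnalyticAt ℝ (X ε) ψ) ∧
        (∀ (ψ : Fin d → ℝ) (i : Fin d), X ε (ψ + Pi.single i (2 * Real.pi)) = X ε ψ) ∧
        (∀ t : ℝ,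
          ε * deriv (deriv (fun s : ℝ => c₀ + X ε (s • ω))) t
            + deriv (fun s : ℝ => c₀ + X ε (s • ω)) t
            + ε * g (c₀ + X ε (t • ω))
            = ε * f (t • ω))) ∧
      TendstoUniformly X 0 (nhdsWithin (0 : ℝ) {0}ᶜ) := by
  have hfc : Continuous f := continuous_iff_continuousAt.2 fun x => (hf x).continuousAt
  have hgc : Continuous g := continuous_iff_continuousAt.2 fun x => (hg x).continuousAt
  obtain ⟨F, hFf⟩ := rsQ_lift d f hfc hfper
  obtain ⟨ε₀, hε₀, θ, hθ, H⟩ := rs_main d ω hω ⟨g, hgc⟩ c₀ f₀ (hg c₀) hzero hsimple F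
    (fun x => by simpa only [hFf] using hf x) (by simpa only [hFf] using hf₀)
  choose! u hu using H
  refine ⟨ε₀, hε₀, fun ε ψ => u ε (rsQ d ψ), fun ε h1 h2 => ⟨(hu ε h1 h2).1, ?_, ?_⟩, ?_⟩
  · intro ψ i
    simp only [rsQ_single]
  · intro t
    have := (hu ε h1 h2).2.1 t
    rw [hFf] at this
    exact this
  · rw [Metric.tendstoUniformly_iff]
    intro η hη
    have hpos : 0 < min ε₀ (θ (η / 2)) := lt_min hε₀ (hθ _)
    rw [eventually_nhdsWithin_iff]
    filter_upwards [Metric.ball_mem_nhds (0:ℝ) hpos] with ε hε hne ψ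
    rw [mem_ball_zero_iff, Real.norm_eq_abs] at hε
    have h1 : 0 < |ε| := abs_pos.2 hne
    have h3 := (hu ε h1 (hε.trans_le (min_le_left _ _))).2.2 (η / 2) (by positivity)
      (hε.trans_le (min_le_right _ _))
    have h4 := (u ε).norm_coe_le_norm (rsQ d ψ)
    rw [dist_comm, Pi.zero_apply, dist_zero_right]
    linarith
end

section
/- Let d ≥ 1, let ω ∈ ℝ^d be nonresonant, let f : ℝ^d → ℝ be real analytic and 2π-periodic in each coordinate with mean value f₀, let g : ℝ → ℝ be real analytic, and let c₀ ∈ ℝ satisfy g(c₀) = f₀ and g'(c₀) > 0. Then there exists ε₀ > 0 such that for every ε ∈ (0, ε₀) there is a quasi-periodic solution x₀(t) = c₀ + X_ε(ωt) of ε x'' + x' + ε g(x) = ε f(ωt), with X_ε real analytic and 2π-periodic in each coordinate, which is locally attractive: there is a neighbourhood U of (c₀, 0) in ℝ² such that every solution y of the same equation with (y(0), y'(0)) ∈ U satisfies |y(t) − x₀(t)| + |y'(t) − x₀'(t)| → 0 as t → +∞. In particular x₀ is the unique quasi-periodic solution whose orbit (x(t), x'(t)) stays in U. -/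
open MeasureTheory Filter
open scoped BoundedContinuousFunction

lemma per_lattice {d : ℕ} {α : Type*} {Y : (Fin d → ℝ) → α}
    (hY : ∀ (ψ : Fin d → ℝ) (i : Fin d), Y (ψ + Pi.single i (2 * Real.pi)) = Y ψ)
    (n : Fin d → ℤ) (ψ : Fin d → ℝ) : Y (ψ + fun i => (n i : ℝ) * (2 * Real.pi)) = Y ψ := by
  have h1 : ∀ (i : Fin d) (m : ℤ) (ψ : Fin d → ℝ),
      Y (ψ + Pi.single i ((m : ℝ) * (2 * Real.pi))) = Y ψ := by
    intro i m
    induction m using Int.induction_on with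
    | zero => intro ψ; simp
    | succ k ih =>
      intro ψ
      have h := hY (ψ + Pi.single i (((k:ℤ):ℝ) * (2 * Real.pi))) i
      rw [ih ψ, add_assoc, ← Pi.single_add] at h
      rw [← h]
      congr 3; push_cast; ring
    | pred k ih =>
      intro ψ
      have h := hY (ψ + Pi.single i (((-(k:ℤ) - 1 : ℤ) : ℝ) * (2 * Real.pi))) i
      rw [← h, add_assoc, ← Pi.single_add, ← ih ψ]
      congr 3; push_cast; ring
  have h2 : ∀ (s : Finset (Fin d)) (ψ : Fin d → ℝ),
      Y (ψ + ∑ i ∈ s, Pi.single i ((n i : ℝ) * (2 * Real.pi))) = Y ψ := by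
    intro s
    induction s using Finset.induction_on with
    | empty => intro ψ; simp
    | insert a s ha ih =>
      intro ψ
      rw [Finset.sum_insert ha, ← add_assoc, ih, h1]
  have := h2 Finset.univ ψ
  rwa [Finset.univ_sum_single] at this

/-- reduce a point modulo the lattice -/
lemma per_reduce {d : ℕ} (ψ : Fin d → ℝ) : ∃ n : Fin d → ℤ,
    (ψ + fun i => (n i : ℝ) * (2 * Real.pi)) ∈ Set.Icc (0 : Fin d → ℝ) (fun _ => 2 * Real.pi) := by
  have hp : 0 < 2 * Real.pi := by positivity
  refine ⟨fun i => - toIcoDiv hp 0 (ψ i), ?_⟩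
  have : ∀ i, ψ i + ((-toIcoDiv hp 0 (ψ i) : ℤ) : ℝ) * (2 * Real.pi) ∈ Set.Ico 0 (0 + 2 * Real.pi) := by
    intro i
    have := sub_toIcoDiv_zsmul_mem_Ico hp 0 (ψ i)
    simpa [sub_eq_add_neg] using this
  constructor
  · intro i; exact (this i).1
  · intro i; have := (this i).2.le; simpa using this

lemma recur {d : ℕ} (ω : Fin d → ℝ) {Y : (Fin d → ℝ) → ℝ} (hc : Continuous Y)
    (hY : ∀ (ψ : Fin d → ℝ) (i : Fin d), Y (ψ + Pi.single i (2 * Real.pi)) = Y ψ)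
    (p : ℝ) {δ : ℝ} (hδ : 0 < δ) (N : ℝ) :
    (∃ T ≥ N, |Y ((p + T) • ω) - Y (p • ω)| < δ) ∧
    (∃ T ≤ -N, |Y ((p + T) • ω) - Y (p • ω)| < δ) := by
  choose n hn using fun m : ℕ => per_reduce ((m : ℝ) • ω)
  obtain ⟨L, -, φ, hφ, hlim⟩ := isCompact_Icc.tendsto_subseq hn
  have hca : ContinuousAt (fun η => Y (p • ω + η)) 0 := by fun_prop
  obtain ⟨ρ, hρ, hball⟩ := Metric.continuousAt_iff.1 hca δ hδ
  obtain ⟨M, hM⟩ := Metric.cauchySeq_iff.1 hlim.cauchySeq ρ hρ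
  obtain ⟨K, hK⟩ := exists_nat_ge N
  have key : ∀ m₁ ≥ M, ∀ m₂ ≥ M, |Y ((p + ((φ m₁ : ℝ) - φ m₂)) • ω) - Y (p • ω)| < δ := by
    intro m₁ h1 m₂ h2
    have h3 := hM m₁ h1 m₂ h2
    rw [dist_eq_norm] at h3
    have h4 := hball (x := _ - _) (by rw [dist_zero_right]; exact h3)
    simp only [add_zero, Real.dist_eq, Function.comp] at h4
    convert h4 using 3
    rw [← per_lattice hY (fun i => n (φ m₁) i - n (φ m₂) i)]
    congr 1
    ext i
    simp only [Pi.add_apply, Pi.smul_apply, Pi.sub_apply, smul_eq_mul]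
    push_cast
    ring
  have hge : (N : ℝ) ≤ (φ (M + K) : ℝ) - φ M := by
    have := hφ.add_le_nat K M
    have h5 : ((K + φ M : ℕ) : ℝ) ≤ φ (K + M) := by exact_mod_cast this
    rw [add_comm M K]
    push_cast at h5
    linarith
  refine ⟨⟨_, hge, key _ (by omega) _ le_rfl⟩, ⟨(φ M : ℝ) - φ (M + K), by linarith, key _ le_rfl _ (by omega)⟩⟩

lemma per_bdd {d : ℕ} {E : Type*} [NormedAddCommGroup E] {Y : (Fin d → ℝ) → E} (hc : Continuous Y)
    (hY : ∀ (ψ : Fin d → ℝ) (i : Fin d), Y (ψ + Pi.single i (2 * Real.pi)) = Y ψ) :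
    ∃ C, ∀ ψ, ‖Y ψ‖ ≤ C := by
  obtain ⟨C, hC⟩ := (isCompact_Icc (a := (0 : Fin d → ℝ)) (b := fun _ => 2 * Real.pi)).exists_bound_of_continuousOn
    hc.continuousOn
  refine ⟨C, fun ψ => ?_⟩
  obtain ⟨n, hn⟩ := per_reduce ψ
  rw [← per_lattice hY n]
  exact hC _ hn

lemma deriv_const_of_min_max {φ : ℝ → ℝ} {s : ℝ} (h1 : IsLocalMin φ s) (h2 : IsLocalMax φ s) :
    deriv (deriv φ) s = 0 := by
  have h : φ =ᶠ[nhds s] fun _ => φ s := by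
    filter_upwards [h1, h2] with x hx hy using le_antisymm hy hx
  rw [h.deriv.deriv_eq]
  simp

lemma diff_near {u : ℝ → ℝ} (hu : Continuous u) {t : ℝ} (h : deriv (deriv u) t ≠ 0) :
    DifferentiableAt ℝ (deriv u) t ∧ ∀ᶠ s in nhds t, DifferentiableAt ℝ u s := by
  have hd : DifferentiableAt ℝ (deriv u) t := differentiableAt_of_deriv_ne_zero h
  refine ⟨hd, ?_⟩
  have hne : ∀ᶠ z in nhdsWithin t {t}ᶜ, DifferentiableAt ℝ u z := by
    filter_upwards [hd.hasDerivAt.eventually_ne h (c := 0)] with z hz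
    exact differentiableAt_of_deriv_ne_zero hz
  have hat : DifferentiableAt ℝ u t := by
    have hlim : Tendsto (deriv u) (nhds t) (nhds (deriv u t)) := hd.continuousAt
    obtain ⟨ρ, hρ, hb⟩ := Metric.mem_nhdsWithin_iff.1 hne
    have hr : HasDerivWithinAt u (deriv u t) (Set.Ici t) t := by
      apply hasDerivWithinAt_Ici_of_tendsto_deriv (s := Set.Ioo t (t + ρ))
      · intro x hx
        refine DifferentiableAt.differentiableWithinAt (hb ⟨?_, ne_of_gt hx.1⟩)
        rw [Metric.mem_ball, Real.dist_eq, abs_lt]; constructor <;> linarith [hx.1, hx.2]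
      · exact hu.continuousWithinAt
      · exact Ioo_mem_nhdsGT (by linarith)
      · exact hlim.mono_left nhdsWithin_le_nhds
    have hl : HasDerivWithinAt u (deriv u t) (Set.Iic t) t := by
      apply hasDerivWithinAt_Iic_of_tendsto_deriv (s := Set.Ioo (t - ρ) t)
      · intro x hx
        refine DifferentiableAt.differentiableWithinAt (hb ⟨?_, ne_of_lt hx.2⟩)
        rw [Metric.mem_ball, Real.dist_eq, abs_lt]; constructor <;> linarith [hx.1, hx.2]
      · exact hu.continuousWithinAt
      · exact Ioo_mem_nhdsLT (by linarith)
      · exact hlim.mono_left nhdsWithin_le_nhds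
    have := hl.union hr
    rw [Set.Iic_union_Ici, hasDerivWithinAt_univ] at this
    exact this.differentiableAt
  rw [eventually_nhdsWithin_iff] at hne
  filter_upwards [hne] with z hz
  by_cases hzt : z = t
  · rwa [hzt]
  · exact hz hzt

lemma junk_core {u h : ℝ → ℝ} {ε r : ℝ} (hε : 0 < ε) (hu : Continuous u)
    (heq : ∀ t, ε * deriv (deriv u) t + deriv u t + ε * h (u t) = 0)
    (hr : ∀ t, |u t| ≤ r)
    (hh : ∀ x, 0 < x → x ≤ r → 0 < h x ∧ h x < x / (4 * ε ^ 2))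
    (hrec : ∀ (p δ N : ℝ), 0 < δ → (∃ T ≥ N, |u (p + T) - u p| < δ) ∧
      (∃ T ≤ -N, |u (p + T) - u p| < δ)) : ∀ t, u t ≤ 0 := by
  have hh' : ∀ t, 0 < u t → 0 < h (u t) ∧ h (u t) < u t / (4 * ε ^ 2) := fun t ht =>
    hh _ ht ((le_abs_self _).trans (hr t))
  have nomin : ∀ s, IsLocalMin u s → u s ≤ 0 := by
    intro s hs
    by_contra! hpos
    have h0 := hs.deriv_eq_zero
    have h1 := heq s
    have h2 : deriv (deriv u) s < 0 := by
      rw [h0] at h1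
      have := mul_pos hε (hh' s hpos).1
      by_contra! h3
      nlinarith [mul_nonneg hε.le h3]
    exact h2.ne (deriv_const_of_min_max hs
      (isLocalMax_of_deriv_deriv_neg h2 h0 hu.continuousAt))
  set μ : ℝ := 1 / (2 * ε) with hμ
  have hμε : μ * ε = 1 / 2 := by rw [hμ]; field_simp
  have hμpos : 0 < μ := by positivity
  have hμ2 : ∀ x : ℝ, x / (4 * ε ^ 2) = μ ^ 2 * x := by intro x; rw [hμ]; field_simp; ring
  have hv : ∀ t, deriv (deriv u) t = - (2 * μ) * deriv u t - h (u t) := by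
    intro t
    have h1 := heq t
    have : ε * (deriv (deriv u) t - (- (2 * μ) * deriv u t - h (u t))) = 0 := by
      linear_combination h1 + (2 * deriv u t) * hμε
    rcases mul_eq_zero.1 this with h | h
    · exact absurd h hε.ne'
    · linarith
  have nomax : ∀ s, IsLocalMax (fun t => Real.exp (μ * t) * u t) s → u s ≤ 0 := by
    intro s hs
    by_contra! hpos
    obtain ⟨p1, p2⟩ := hh' s hpos
    rw [hμ2] at p2
    have hexp : ∀ t : ℝ, HasDerivAt (fun t : ℝ => Real.exp (μ * t)) (Real.exp (μ * t) * μ) t := by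
      intro t
      simpa using ((hasDerivAt_id t).const_mul μ).exp
    have hdu : DifferentiableAt ℝ u s := by
      by_contra hnd
      have h0 := deriv_zero_of_not_differentiableAt hnd
      have h1 := hv s
      rw [h0] at h1
      exact hnd (diff_near hu (t := s) (by rw [h1]; linarith)).2.self_of_nhds
    have hφ : ∀ t, DifferentiableAt ℝ u t → HasDerivAt (fun t => Real.exp (μ * t) * u t)
        (Real.exp (μ * t) * (μ * u t + deriv u t)) t := by
      intro t ht
      refine ((hexp t).mul ht.hasDerivAt).congr_deriv ?_
      ring
    have h0 := hs.deriv_eq_zero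
    rw [(hφ s hdu).deriv] at h0
    have hw : μ * u s + deriv u s = 0 := by
      rcases mul_eq_zero.1 h0 with h | h
      · exact absurd h (Real.exp_pos _).ne'
      · exact h
    have h1 := hv s
    have h1' : deriv (deriv u) s = 2 * μ ^ 2 * u s - h (u s) := by
      rw [h1]; linear_combination (-2 * μ) * hw
    have hp : 0 < μ ^ 2 * u s := by positivity
    obtain ⟨hdv, hev⟩ := diff_near hu (t := s) (by rw [h1']; linarith)
    have heq2 : deriv (fun t => Real.exp (μ * t) * u t) =ᶠ[nhds s]
        fun t => Real.exp (μ * t) * (μ * u t + deriv u t) := by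
      filter_upwards [hev] with t ht using (hφ t ht).deriv
    have hdd : deriv (deriv (fun t => Real.exp (μ * t) * u t)) s =
        Real.exp (μ * s) * (μ ^ 2 * u s - h (u s)) := by
      rw [heq2.deriv_eq]
      have := (hexp s).mul ((hdu.hasDerivAt.const_mul μ).add hdv.hasDerivAt)
      refine this.deriv.trans ?_
      rw [h1', Pi.add_apply]
      linear_combination (Real.exp (μ * s) * 2 * μ) * hw
    have hpos2 : 0 < deriv (deriv (fun t => Real.exp (μ * t) * u t)) s := by
      rw [hdd]; exact mul_pos (Real.exp_pos _) (by linarith)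
    refine hpos2.ne' (deriv_const_of_min_max (isLocalMin_of_deriv_deriv_pos hpos2 ?_ (by fun_prop)) hs)
    rw [(hφ s hdu).deriv, hw, mul_zero]
  intro t₀
  by_contra! ht₀
  -- u positive on a half line
  have half : (∀ t ≥ t₀, 0 < u t) ∨ (∀ t ≤ t₀, 0 < u t) := by
    by_contra! hcon
    obtain ⟨⟨β, hβ, hβu⟩, ⟨α, hα, hαu⟩⟩ := hcon
    have hαt : α < t₀ := lt_of_le_of_ne hα (by rintro rfl; linarith)
    have hβt : t₀ < β := lt_of_le_of_ne hβ (by rintro rfl; linarith)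
    have hcont : Continuous (fun t => Real.exp (μ * t) * u t) := by fun_prop
    obtain ⟨s, hs, hmax⟩ := isCompact_Icc.exists_isMaxOn (Set.nonempty_Icc.2 (hαt.trans hβt).le)
      hcont.continuousOn
    have hst : Real.exp (μ * t₀) * u t₀ ≤ Real.exp (μ * s) * u s := hmax ⟨hαt.le, hβt.le⟩
    have hspos : 0 < u s := by
      have : 0 < Real.exp (μ * s) * u s := lt_of_lt_of_le (by positivity) hst
      exact pos_of_mul_pos_right this (Real.exp_pos _).le
    have hsI : Set.Icc α β ∈ nhds s := by
      apply Icc_mem_nhds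
      · exact lt_of_le_of_ne hs.1 (by rintro rfl; linarith)
      · exact lt_of_le_of_ne hs.2 (by rintro rfl; linarith)
    exact absurd (nomax s (hmax.isLocalMax hsI)) (not_le.2 hspos)
  -- u is not constant
  have nonconst : ∃ p l, u l < u p := by
    by_contra! hcon
    have hc : u = fun _ => u t₀ := by
      ext x; exact le_antisymm (hcon _ _) (hcon _ _)
    have h1 := heq t₀
    have hd : deriv u = fun _ => 0 := by
      rw [hc]; ext x; simp
    rw [hd] at h1
    simp at h1
    rcases h1 with h1 | h1
    · linarith
    · linarith [(hh' t₀ ht₀).1]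
  obtain ⟨p, l, hpl⟩ := nonconst
  set δ := (u p - u l) / 2 with hδ
  have hδp : 0 < δ := by rw [hδ]; linarith
  -- three points
  have three : ∃ x y z, x < y ∧ y < z ∧ u y < u x ∧ u y < u z ∧ (∀ t ∈ Set.Icc x z, 0 < u t) := by
    rcases half with hp | hp
    · obtain ⟨⟨T1, hT1, h1⟩, -⟩ := hrec p δ (t₀ - p) hδp
      obtain ⟨⟨T2, hT2, h2⟩, -⟩ := hrec l δ (p + T1 - l + 1) hδp
      obtain ⟨⟨T3, hT3, h3⟩, -⟩ := hrec p δ (l + T2 - p + 1) hδp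
      rw [abs_lt] at h1 h2 h3
      refine ⟨p + T1, l + T2, p + T3, by linarith, by linarith, by linarith, by linarith, ?_⟩
      intro t ht
      exact hp t (by linarith [ht.1])
    · obtain ⟨-, ⟨T1, hT1, h1⟩⟩ := hrec p δ (-(t₀ - p)) hδp
      obtain ⟨-, ⟨T2, hT2, h2⟩⟩ := hrec l δ (-(p + T1 - l - 1)) hδp
      obtain ⟨-, ⟨T3, hT3, h3⟩⟩ := hrec p δ (-(l + T2 - p - 1)) hδp
      rw [abs_lt] at h1 h2 h3
      refine ⟨p + T3, l + T2, p + T1, by linarith, by linarith, by linarith, by linarith, ?_⟩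
      intro t ht
      exact hp t (by linarith [ht.2])
  obtain ⟨x, y, z, hxy, hyz, h1, h2, h3⟩ := three
  obtain ⟨s, hs, hmin⟩ := isCompact_Icc.exists_isMinOn (Set.nonempty_Icc.2 (hxy.trans hyz).le)
      hu.continuousOn
  have hsy : u s ≤ u y := hmin ⟨hxy.le, hyz.le⟩
  have hsI : Set.Icc x z ∈ nhds s := by
    apply Icc_mem_nhds
    · exact lt_of_le_of_ne hs.1 (by rintro rfl; linarith)
    · exact lt_of_le_of_ne hs.2 (by rintro rfl; linarith)
  exact absurd (nomin s (hmin.isLocalMin hsI)) (not_le.2 (h3 s hs))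

lemma junk_zero {u h : ℝ → ℝ} {ε r : ℝ} (hε : 0 < ε) (hu : Continuous u)
    (heq : ∀ t, ε * deriv (deriv u) t + deriv u t + ε * h (u t) = 0)
    (hr : ∀ t, |u t| ≤ r)
    (hh : ∀ x, 0 < x → x ≤ r → 0 < h x ∧ h x < x / (4 * ε ^ 2))
    (hh' : ∀ x, 0 < x → x ≤ r → 0 < - h (-x) ∧ - h (-x) < x / (4 * ε ^ 2))
    (hrec : ∀ (p δ N : ℝ), 0 < δ → (∃ T ≥ N, |u (p + T) - u p| < δ) ∧
      (∃ T ≤ -N, |u (p + T) - u p| < δ)) : ∀ t, u t = 0 := by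
  intro t
  refine le_antisymm (junk_core hε hu heq hr hh hrec t) ?_
  have hd : deriv (fun t => - u t) = fun t => - deriv u t := by ext t; simp
  have hd2 : deriv (fun t => - deriv u t) = fun t => - deriv (deriv u) t := by ext t; simp
  have := junk_core (u := fun t => - u t) (h := fun x => - h (-x)) hε (by fun_prop) (by
    intro t
    rw [hd, hd2]
    simp only [neg_neg]
    linarith [heq t]) (by intro t; simpa using hr t) hh' (by
      intro p δ N hδ
      have : ∀ T, |-u (p + T) - -u p| = |u (p + T) - u p| := by
        intro T; rw [← abs_neg]; congr 1; ring
      simp only [this]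
      exact hrec p δ N hδ) t
  linarith

/-- If the forcing minus `g` is nonzero near `(c₀,0)`, the orbit cannot stay very near `(c₀,0)`. -/
lemma junk_vacuous {F g : ℝ → ℝ} (hF : Continuous F) (hg : Continuous g) {ε c₀ t₀ : ℝ} (hε : 0 < ε)
    (hne : F t₀ ≠ g c₀) : ∃ r₁ > 0, ∀ y : ℝ → ℝ,
      (∀ t, ε * deriv (deriv y) t + deriv y t + ε * g (y t) = ε * F t) →
      (∀ t, |y t - c₀| < r₁ ∧ |deriv y t| < r₁) → False := by
  wlog hlt : g c₀ < F t₀ generalizing F g c₀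
  · have hlt' : F t₀ < g c₀ := lt_of_le_of_ne (not_lt.1 hlt) hne
    obtain ⟨r₁, hr₁, hy⟩ := this (F := fun t => - F t) (g := fun x => - g (-x)) (c₀ := -c₀)
      (by fun_prop) (by fun_prop) (by simpa using hne) (by simpa using hlt')
    refine ⟨r₁, hr₁, fun y h1 h2 => hy (fun t => - y t) ?_ ?_⟩
    · intro t
      have hd : deriv (fun t => - y t) = fun t => - deriv y t := by ext t; simp
      have hd2 : deriv (fun t => - deriv y t) = fun t => - deriv (deriv y) t := by ext t; simp
      rw [hd, hd2]; simp only [neg_neg]; linarith [h1 t]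
    · intro t
      have hd : deriv (fun t => - y t) = fun t => - deriv y t := by ext t; simp
      rw [hd]; simp only [abs_neg]
      refine ⟨?_, (h2 t).2⟩
      rw [← abs_neg]; convert (h2 t).1 using 2; ring
  set δ := (F t₀ - g c₀) / 4 with hδ
  have hδp : 0 < δ := by rw [hδ]; linarith
  obtain ⟨ℓ, hℓ, hFb⟩ := Metric.continuousAt_iff.1 (hF.continuousAt (x := t₀)) δ hδp
  obtain ⟨ρ, hρ, hgb⟩ := Metric.continuousAt_iff.1 (hg.continuousAt (x := c₀)) δ hδp
  refine ⟨min ρ (min (ε * δ) (δ * (ℓ / 2) / 2)), by positivity, fun y h1 h2 => ?_⟩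
  have hder : ∀ t ∈ Set.Icc t₀ (t₀ + ℓ / 2), δ ≤ deriv (deriv y) t := by
    intro t ht
    have e1 := hFb (x := t) (by rw [Real.dist_eq, abs_lt]; constructor <;> linarith [ht.1, ht.2])
    have e2 := hgb (x := y t) (by rw [Real.dist_eq]; exact lt_of_lt_of_le (h2 t).1 (min_le_left _ _))
    rw [Real.dist_eq, abs_lt] at e1 e2
    have e3 : |deriv y t| < ε * δ :=
      lt_of_lt_of_le (h2 t).2 ((min_le_right _ _).trans (min_le_left _ _))
    rw [abs_lt] at e3
    have e4 := h1 t
    have e5 : ε * (2 * δ) ≤ ε * (F t - g (y t)) := by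
      apply mul_le_mul_of_nonneg_left _ hε.le; linarith
    have : ε * δ ≤ ε * deriv (deriv y) t := by linarith
    exact le_of_mul_le_mul_left this hε
  have hdiff : ∀ t ∈ Set.Icc t₀ (t₀ + ℓ / 2), DifferentiableAt ℝ (deriv y) t := fun t ht =>
    differentiableAt_of_deriv_ne_zero (by linarith [hder t ht])
  have hmv := (convex_Icc t₀ (t₀ + ℓ / 2)).mul_sub_le_image_sub_of_le_deriv (f := deriv y) (C := δ)
    (fun t ht => (hdiff t ht).continuousAt.continuousWithinAt)
    (fun t ht => (hdiff t (interior_subset ht)).differentiableWithinAt)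
    (fun t ht => hder t (interior_subset ht)) t₀ ⟨le_rfl, by linarith⟩ (t₀ + ℓ / 2)
    ⟨by linarith, le_rfl⟩ (by linarith)
  have e1 : |deriv y t₀| < δ * (ℓ / 2) / 2 :=
      lt_of_lt_of_le (h2 _).2 ((min_le_right _ _).trans (min_le_right _ _))
  have e2 : |deriv y (t₀ + ℓ / 2)| < δ * (ℓ / 2) / 2 :=
      lt_of_lt_of_le (h2 _).2 ((min_le_right _ _).trans (min_le_right _ _))
  rw [abs_lt] at e1 e2
  have : t₀ + ℓ / 2 - t₀ = ℓ / 2 := by ring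
  rw [this] at hmv
  linarith

lemma attract {z z1 z2 : ℝ → ℝ} {a b ρ : ℝ} (hz : ∀ t, HasDerivAt z (z1 t) t)
    (hz1 : ∀ t, HasDerivAt z1 (z2 t) t) (hb : 0 < b) (hab : 4 * b ≤ a) (hρ : 0 < ρ)
    (hp : ∀ t, |z t| ≤ ρ → |z2 t + (a + b) * z1 t + a * b * z t| ≤ a * b / 4 * |z t|)
    (h0 : ((z1 0 + a * z 0) / (a - b)) ^ 2 + ((z1 0 + b * z 0) / (a - b)) ^ 2 ≤ ρ ^ 2 / 2) :
    Tendsto (fun t => |z t| + |z1 t|) atTop (nhds 0) := by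
  have hab' : 0 < a - b := by linarith
  have ha : 0 < a := by linarith
  set S : ℝ → ℝ := fun t => (z1 t + a * z t) / (a - b) with hS
  set F : ℝ → ℝ := fun t => (z1 t + b * z t) / (a - b) with hF
  set P : ℝ → ℝ := fun t => (z2 t + (a + b) * z1 t + a * b * z t) / (a - b) with hP
  have hzSF : ∀ t, z t = S t - F t := by
    intro t; simp only [hS, hF]; field_simp; ring
  have hS' : ∀ t, HasDerivAt S (-b * S t + P t) t := by
    intro t
    refine (((hz1 t).add ((hz t).const_mul a)).div_const (a - b)).congr_deriv ?_
    simp only [hS, hP]; field_simp; ring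
  have hF' : ∀ t, HasDerivAt F (-a * F t + P t) t := by
    intro t
    refine (((hz1 t).add ((hz t).const_mul b)).div_const (a - b)).congr_deriv ?_
    simp only [hF, hP]; field_simp; ring
  set V : ℝ → ℝ := fun t => S t ^ 2 + F t ^ 2 with hV
  set V' : ℝ → ℝ := fun t => 2 * S t * (-b * S t + P t) + 2 * F t * (-a * F t + P t) with hV'
  have hVd : ∀ t, HasDerivAt V (V' t) t := by
    intro t
    refine (((hS' t).pow 2).add ((hF' t).pow 2)).congr_deriv ?_
    simp only [hV']; push_cast; ring
  have hVz : ∀ t, V t ≤ ρ ^ 2 / 2 → |z t| ≤ ρ := by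
    intro t ht
    apply abs_le_of_sq_le_sq _ hρ.le
    rw [hzSF t]
    simp only [hV] at ht
    nlinarith [sq_nonneg (S t + F t)]
  have hVle : ∀ t, V t ≤ ρ ^ 2 / 2 → V' t ≤ -(2 * b / 3) * V t := by
    intro t ht
    have h1 := hp t (hVz t ht)
    have hPb : |P t| ≤ b / 3 * |z t| := by
      simp only [hP]
      rw [abs_div, abs_of_pos hab', div_le_iff₀ hab']
      refine h1.trans ?_
      have : a / 4 ≤ (a - b) / 3 := by linarith
      calc a * b / 4 * |z t| = a / 4 * (b * |z t|) := by ring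
        _ ≤ (a - b) / 3 * (b * |z t|) := by gcongr
        _ = _ := by ring
    have hz' : |z t| ≤ |S t| + |F t| := by rw [hzSF t]; exact abs_sub _ _
    have h2 : (S t + F t) * P t ≤ (|S t| + |F t|) * (b / 3 * (|S t| + |F t|)) := by
      calc (S t + F t) * P t ≤ |(S t + F t) * P t| := le_abs_self _
        _ = |S t + F t| * |P t| := abs_mul _ _
        _ ≤ (|S t| + |F t|) * (b / 3 * (|S t| + |F t|)) := by
          apply mul_le_mul (abs_add_le _ _) (hPb.trans (by gcongr)) (abs_nonneg _) (by positivity)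
    have h3 : (|S t| + |F t|) * (b / 3 * (|S t| + |F t|)) ≤ b / 3 * (2 * (S t ^ 2 + F t ^ 2)) := by
      have : (|S t| + |F t|) ^ 2 ≤ 2 * (S t ^ 2 + F t ^ 2) := by
        nlinarith [sq_nonneg (|S t| - |F t|), sq_abs (S t), sq_abs (F t)]
      calc _ = b / 3 * (|S t| + |F t|) ^ 2 := by ring
        _ ≤ _ := by gcongr
    simp only [hV', hV]
    have h4 : b * F t ^ 2 ≤ a * F t ^ 2 := by gcongr; linarith
    nlinarith
  have hconf : ∀ t, 0 ≤ t → V t ≤ ρ ^ 2 / 2 := by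
    intro T hT
    refine image_le_of_deriv_right_lt_deriv_boundary (f := V) (f' := V') (a := 0) (b := T)
      (B := fun _ => ρ ^ 2 / 2) (B' := fun _ => 0)
      (fun t _ => (hVd t).continuousAt.continuousWithinAt)
      (fun t _ => (hVd t).hasDerivWithinAt) h0 (fun t => hasDerivAt_const _ _) ?_ ⟨hT, le_rfl⟩
    intro t _ ht
    have := hVle t ht.le
    have h5 : 0 < 2 * b / 3 * V t := by rw [ht]; positivity
    linarith
  set c := 2 * b / 3 with hc
  have hcpos : 0 < c := by positivity
  have hdecay : ∀ t, 0 ≤ t → V t ≤ ρ ^ 2 / 2 * Real.exp (-c * t) := by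
    have hW : ∀ t, HasDerivAt (fun t => V t * Real.exp (c * t))
        ((V' t + c * V t) * Real.exp (c * t)) t := by
      intro t
      have he : HasDerivAt (fun t : ℝ => Real.exp (c * t)) (Real.exp (c * t) * c) t := by
        simpa using ((hasDerivAt_id t).const_mul c).exp
      refine ((hVd t).mul he).congr_deriv ?_
      ring
    have hanti : AntitoneOn (fun t => V t * Real.exp (c * t)) (Set.Ici 0) := by
      apply antitoneOn_of_deriv_nonpos (convex_Ici 0)
      · exact fun t _ => (hW t).continuousAt.continuousWithinAt
      · exact fun t _ => (hW t).differentiableAt.differentiableWithinAt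
      · intro t ht
        rw [interior_Ici] at ht
        rw [(hW t).deriv]
        have := hVle t (hconf t (le_of_lt ht))
        exact mul_nonpos_of_nonpos_of_nonneg (by linarith) (Real.exp_pos _).le
    intro t ht
    have h1 := hanti (Set.mem_Ici.2 le_rfl) (Set.mem_Ici.2 ht) ht
    simp only [mul_zero, Real.exp_zero, mul_one] at h1
    have h2 := hconf 0 le_rfl
    have h3 : V t = V t * Real.exp (c * t) * Real.exp (-c * t) := by
      rw [mul_assoc, ← Real.exp_add]; simp
    rw [h3]
    exact mul_le_mul_of_nonneg_right (h1.trans h2) (Real.exp_pos _).le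
  have hV0 : Tendsto V atTop (nhds 0) := by
    have hexp : Tendsto (fun t => ρ ^ 2 / 2 * Real.exp (-c * t)) atTop (nhds 0) := by
      have h1 : Tendsto (fun t : ℝ => -c * t) atTop atBot :=
        tendsto_id.const_mul_atTop_of_neg (by linarith)
      simpa using (Real.tendsto_exp_atBot.comp h1).const_mul (ρ ^ 2 / 2)
    refine tendsto_of_tendsto_of_tendsto_of_le_of_le' tendsto_const_nhds hexp ?_ ?_
    · exact Eventually.of_forall fun t => by simp only [hV]; positivity
    · filter_upwards [eventually_ge_atTop 0] with t ht using hdecay t ht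
  have hsq : Tendsto (fun t => Real.sqrt (V t)) atTop (nhds 0) := by
    simpa using hV0.sqrt
  have hb1 : ∀ t, |z t| + |z1 t| ≤ (2 + 2 * a) * Real.sqrt (V t) := by
    intro t
    have hSle : |S t| ≤ Real.sqrt (V t) := Real.abs_le_sqrt (by simp only [hV]; nlinarith [sq_nonneg (F t)])
    have hFle : |F t| ≤ Real.sqrt (V t) := Real.abs_le_sqrt (by simp only [hV]; nlinarith [sq_nonneg (S t)])
    have e1 : |z t| ≤ |S t| + |F t| := by rw [hzSF t]; exact abs_sub _ _
    have e2 : z1 t = a * F t - b * S t := by simp only [hS, hF]; field_simp; ring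
    have e3 : |z1 t| ≤ a * |F t| + b * |S t| := by
      rw [e2]; refine (abs_sub _ _).trans ?_
      rw [abs_mul, abs_mul, abs_of_pos ha, abs_of_pos hb]
    have hs0 := Real.sqrt_nonneg (V t)
    have e4 : a * |F t| ≤ a * Real.sqrt (V t) := by gcongr
    have e5 : b * |S t| ≤ a * Real.sqrt (V t) := by gcongr; linarith
    nlinarith
  refine squeeze_zero (fun t => by positivity) hb1 ?_
  simpa using hsq.const_mul (2 + 2 * a)

section resolvent
variable {d : ℕ} {E : Type*} [NormedAddCommGroup E] [NormedSpace ℝ E]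

/-- Laplace average along the backward flow. -/
noncomputable def lapl (ω : Fin d → ℝ) (a : ℝ) (F : (Fin d → ℝ) → E) (ψ : Fin d → ℝ) : E :=
  ∫ τ in Set.Ioi (0 : ℝ), Real.exp (-a * τ) • F (ψ - τ • ω)

lemma lapl_exp_int {a : ℝ} (ha : 0 < a) : ∫ τ in Set.Ioi (0 : ℝ), Real.exp (-a * τ) = a⁻¹ := by
  have := integral_exp_mul_Ioi (a := -a) (by linarith) 0
  simpa using this

lemma lapl_exp_integrable {a : ℝ} (ha : 0 < a) :
    IntegrableOn (fun τ => Real.exp (-a * τ)) (Set.Ioi (0 : ℝ)) :=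
  integrableOn_exp_mul_Ioi (by linarith) 0

lemma lapl_integrable (ω : Fin d → ℝ) {a : ℝ} (ha : 0 < a) {F : (Fin d → ℝ) → E} (hF : Continuous F)
    {C : ℝ} (hC : ∀ ψ, ‖F ψ‖ ≤ C) (ψ : Fin d → ℝ) :
    IntegrableOn (fun τ : ℝ => Real.exp (-a * τ) • F (ψ - τ • ω)) (Set.Ioi 0) := by
  refine Integrable.mono' ((lapl_exp_integrable ha).mul_const C)
    (Continuous.aestronglyMeasurable (by fun_prop)) (ae_of_all _ fun τ => ?_)
  rw [norm_smul, Real.norm_of_nonneg (Real.exp_pos _).le]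
  gcongr
  exact hC _

lemma lapl_norm_le (ω : Fin d → ℝ) {a : ℝ} (ha : 0 < a) {F : (Fin d → ℝ) → E}
    {C : ℝ} (hC : ∀ ψ, ‖F ψ‖ ≤ C) (ψ : Fin d → ℝ) : ‖lapl ω a F ψ‖ ≤ a⁻¹ * C := by
  rw [← lapl_exp_int ha, ← integral_mul_const]
  refine norm_integral_le_of_norm_le ((lapl_exp_integrable ha).mul_const C) (ae_of_all _ fun τ => ?_)
  rw [norm_smul, Real.norm_of_nonneg (Real.exp_pos _).le]
  gcongr
  exact hC _

lemma lapl_continuous (ω : Fin d → ℝ) {a : ℝ} (ha : 0 < a) {F : (Fin d → ℝ) → E} (hF : Continuous F)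
    {C : ℝ} (hC : ∀ ψ, ‖F ψ‖ ≤ C) : Continuous (lapl ω a F) := by
  refine continuous_of_dominated (bound := fun τ => Real.exp (-a * τ) * C)
    (fun ψ => Continuous.aestronglyMeasurable (by fun_prop)) (fun ψ => ae_of_all _ fun τ => ?_)
    ((lapl_exp_integrable ha).mul_const C) (ae_of_all _ fun τ => by fun_prop)
  rw [norm_smul, Real.norm_of_nonneg (Real.exp_pos _).le]
  gcongr
  exact hC _

lemma lapl_add (ω : Fin d → ℝ) {a : ℝ} (ha : 0 < a) {F G : (Fin d → ℝ) → E} (hF : Continuous F)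
    (hG : Continuous G) {C C' : ℝ} (hC : ∀ ψ, ‖F ψ‖ ≤ C) (hC' : ∀ ψ, ‖G ψ‖ ≤ C') (ψ : Fin d → ℝ) :
    lapl ω a (fun x => F x + G x) ψ = lapl ω a F ψ + lapl ω a G ψ := by
  unfold lapl
  rw [← integral_add (lapl_integrable ω ha hF hC ψ) (lapl_integrable ω ha hG hC' ψ)]
  simp only [smul_add]

lemma lapl_flow {ω : Fin d → ℝ} {a : ℝ} (ha : 0 < a) {F : (Fin d → ℝ) → ℝ} (hF : Continuous F)
    {C : ℝ} (hC : ∀ ψ, ‖F ψ‖ ≤ C) (t : ℝ) :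
    HasDerivAt (fun s : ℝ => lapl ω a F (s • ω)) (F (t • ω) - a * lapl ω a F (t • ω)) t := by
  set G : ℝ → ℝ := fun s => Real.exp (a * s) * F (s • ω) with hG
  have hGc : Continuous G := by fun_prop
  have hrep : ∀ s : ℝ, lapl ω a F (s • ω) = Real.exp (-a * s) * ∫ x in Set.Iic s, G x := by
    intro s
    unfold lapl
    have h1 : ∀ τ : ℝ, Real.exp (-a * τ) • F (s • ω - τ • ω) = Real.exp (-a * s) * G (s - τ) := by
      intro τ
      simp only [hG, smul_eq_mul]
      rw [← mul_assoc, ← Real.exp_add, sub_smul]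
      congr 2; ring
    simp only [h1]
    rw [integral_const_mul]
    congr 1
    have h2 := integral_comp_neg_Ioi (0 : ℝ) (fun x => G (s + x))
    have h3 : (fun τ => G (s - τ)) = fun τ => G (s + -τ) := by ext; rw [sub_eq_add_neg]
    rw [h3, h2, neg_zero]
    have h4 := (measurePreserving_add_left (volume : Measure ℝ) s).setIntegral_preimage_emb
      (measurableEmbedding_addLeft s) G (Set.Iic s)
    rw [← h4]
    congr 2
    ext x; simp
  have hIntg : ∀ s : ℝ, IntegrableOn G (Set.Iic s) := by
    intro s
    refine Integrable.mono' ((integrableOn_exp_mul_Iic ha s).mul_const C)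
      hGc.aestronglyMeasurable (ae_of_all _ fun τ => ?_)
    simp only [hG]
    rw [norm_mul, Real.norm_of_nonneg (Real.exp_pos _).le]
    gcongr
    exact hC _
  have hd : HasDerivAt (fun s => ∫ x in Set.Iic s, G x) (G t) t := by
    have h5 : (fun s => ∫ x in Set.Iic s, G x) = fun s => (∫ x in Set.Iic (0 : ℝ), G x) + ∫ x in (0 : ℝ)..s, G x := by
      ext s
      rw [← intervalIntegral.integral_Iic_sub_Iic (hIntg 0) (hIntg s)]; ring
    rw [h5]
    exact (intervalIntegral.integral_hasDerivAt_right (hGc.intervalIntegrable _ _)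
      (hGc.stronglyMeasurableAtFilter _ _) hGc.continuousAt).const_add _
  have he : HasDerivAt (fun s : ℝ => Real.exp (-a * s)) (Real.exp (-a * t) * (-a)) t := by
    simpa using ((hasDerivAt_id t).const_mul (-a)).exp
  have hfin := he.mul hd
  have : (fun s : ℝ => lapl ω a F (s • ω)) = (fun s : ℝ => Real.exp (-a * s)) * fun s => ∫ x in Set.Iic s, G x := by
    ext s; rw [hrep s]; rfl
  rw [this]
  refine hfin.congr_deriv ?_
  rw [hrep t]
  have : Real.exp (-a * t) * G t = F (t • ω) := by
    simp only [hG]; rw [← mul_assoc, ← Real.exp_add]; simp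
  rw [this]; ring

/-- the resolvent on bounded continuous functions -/
noncomputable def resB (ω : Fin d → ℝ) (a : ℝ) (ha : 0 < a) :
    ((Fin d → ℝ) →ᵇ ℝ) →L[ℝ] ((Fin d → ℝ) →ᵇ ℝ) :=
  LinearMap.mkContinuous
    { toFun := fun F => BoundedContinuousFunction.ofNormedAddCommGroup (lapl ω a F)
        (lapl_continuous ω ha F.continuous F.norm_coe_le_norm) (a⁻¹ * ‖F‖)
        (lapl_norm_le ω ha F.norm_coe_le_norm)
      map_add' := fun F G => by
        ext ψ
        exact lapl_add ω ha F.continuous G.continuous F.norm_coe_le_norm G.norm_coe_le_norm ψ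
      map_smul' := fun c F => by
        ext ψ
        change lapl ω a (fun x => c * F x) ψ = c * lapl ω a F ψ
        unfold lapl
        rw [← integral_const_mul]
        congr 1
        ext τ
        simp only [smul_eq_mul]; ring } a⁻¹
    (fun F => BoundedContinuousFunction.norm_ofNormedAddCommGroup_le (lapl_continuous ω ha F.continuous F.norm_coe_le_norm) (by positivity) (lapl_norm_le ω ha F.norm_coe_le_norm))

lemma resB_apply (ω : Fin d → ℝ) (a : ℝ) (ha : 0 < a) (F : (Fin d → ℝ) →ᵇ ℝ) (ψ : Fin d → ℝ) :
    resB ω a ha F ψ = lapl ω a F ψ := rfl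

lemma resB_norm (ω : Fin d → ℝ) (a : ℝ) (ha : 0 < a) (F : (Fin d → ℝ) →ᵇ ℝ) :
    ‖resB ω a ha F‖ ≤ a⁻¹ * ‖F‖ := by
  rw [BoundedContinuousFunction.norm_le (by positivity)]
  exact lapl_norm_le ω ha F.norm_coe_le_norm

/-- translation -/
noncomputable def transB (η : Fin d → ℝ) (F : (Fin d → ℝ) →ᵇ ℝ) : (Fin d → ℝ) →ᵇ ℝ :=
  F.compContinuous ⟨fun ψ => ψ + η, by fun_prop⟩

lemma transB_apply (η ψ : Fin d → ℝ) (F : (Fin d → ℝ) →ᵇ ℝ) : transB η F ψ = F (ψ + η) := rfl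

lemma resB_transB (ω : Fin d → ℝ) (a : ℝ) (ha : 0 < a) (F : (Fin d → ℝ) →ᵇ ℝ) (η : Fin d → ℝ) :
    resB ω a ha (transB η F) = transB η (resB ω a ha F) := by
  ext ψ
  rw [transB_apply, resB_apply, resB_apply]
  unfold lapl
  congr 1
  ext τ
  rw [transB_apply, sub_add_eq_add_sub]

end resolvent

section abel
variable {d : ℕ}

attribute [local instance] instMeasureSpaceUnitAddCircle

instance instHaarUAC : Measure.IsAddHaarMeasure (volume : Measure UnitAddCircle) :=
  inferInstanceAs (Measure.IsAddHaarMeasure AddCircle.haarAddCircle)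

instance instProbUAC : IsProbabilityMeasure (volume : Measure UnitAddCircle) :=
  inferInstanceAs (IsProbabilityMeasure AddCircle.haarAddCircle)

/-- projection to the torus -/
noncomputable def projT (ψ : Fin d → ℝ) : UnitAddTorus (Fin d) :=
  fun i => ((ψ i / (2 * Real.pi) : ℝ) : UnitAddCircle)

lemma projT_continuous : Continuous (projT (d := d)) := by
  unfold projT
  refine continuous_pi fun i => ?_
  exact (AddCircle.continuous_mk' 1).comp (by fun_prop)

lemma projT_add (ψ η : Fin d → ℝ) : projT (ψ + η) = projT ψ + projT η := by
  ext i
  simp only [projT, Pi.add_apply, add_div, AddCircle.coe_add]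

lemma mFourier_projT (n : Fin d → ℤ) (ψ : Fin d → ℝ) :
    UnitAddTorus.mFourier n (projT ψ) = Complex.exp (Complex.I * ((∑ i, ψ i * (n i : ℝ) : ℝ) : ℂ)) := by
  simp only [UnitAddTorus.mFourier, ContinuousMap.coe_mk, projT, fourier_coe_apply]
  rw [← Complex.exp_sum]
  congr 1
  push_cast
  rw [Finset.mul_sum]
  refine Finset.sum_congr rfl fun i _ => ?_
  have : (Real.pi : ℂ) ≠ 0 := by exact_mod_cast Real.pi_ne_zero
  field_simp

lemma mFourier_add_pt (n : Fin d → ℤ) (x y : UnitAddTorus (Fin d)) :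
    UnitAddTorus.mFourier n (x + y) = UnitAddTorus.mFourier n x * UnitAddTorus.mFourier n y := by
  simp only [UnitAddTorus.mFourier, ContinuousMap.coe_mk, Pi.add_apply, fourier_apply, smul_add,
    AddCircle.toCircle_add, Circle.coe_mul, Finset.prod_mul_distrib]

lemma mFourier_integral {ω : Fin d → ℝ} {n : Fin d → ℤ} (hs : (∑ i, ω i * (n i : ℝ)) ≠ 0) :
    ∫ x, UnitAddTorus.mFourier n x = 0 := by
  set s := ∑ i, ω i * (n i : ℝ) with hsdef
  have h1 := integral_add_right_eq_self (μ := (volume : Measure (UnitAddTorus (Fin d))))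
    (UnitAddTorus.mFourier n) (projT ((Real.pi / s) • ω))
  simp only [mFourier_add_pt] at h1
  rw [integral_mul_const, mFourier_projT] at h1
  have h2 : ∑ i, ((Real.pi / s) • ω) i * (n i : ℝ) = Real.pi := by
    simp only [Pi.smul_apply, smul_eq_mul, mul_assoc]
    rw [← Finset.mul_sum, ← hsdef]
    field_simp
  rw [h2, mul_comm Complex.I, Complex.exp_pi_mul_I] at h1
  have h3 : (2 : ℂ) * ∫ x, UnitAddTorus.mFourier n x = 0 := by linear_combination - h1
  simpa using h3

lemma lapl_smul (ω : Fin d → ℝ) (a : ℝ) (F : (Fin d → ℝ) → ℂ) (c : ℂ) (ψ : Fin d → ℝ) :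
    lapl ω a (fun x => c * F x) ψ = c * lapl ω a F ψ := by
  unfold lapl
  rw [← integral_const_mul]
  congr 1
  ext τ
  simp only [Complex.real_smul]; ring

def AbelProp (ω : Fin d → ℝ) (G : C(UnitAddTorus (Fin d), ℂ)) : Prop :=
  ∀ δ > (0 : ℝ), ∃ b₀ > (0 : ℝ), ∀ b : ℝ, 0 < b → b < b₀ → ∀ ψ : Fin d → ℝ,
    ‖(b : ℂ) * lapl ω b (fun x => G (projT x)) ψ - ∫ x, G x‖ ≤ δ

lemma abel_mono (ω : Fin d → ℝ)
    (hω : ∀ ν : Fin d → ℤ, ν ≠ 0 → (∑ i, ω i * (ν i : ℝ)) ≠ 0) (n : Fin d → ℤ) :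
    AbelProp ω (UnitAddTorus.mFourier n) := by
  intro δ hδ
  by_cases hn : n = 0
  · refine ⟨1, one_pos, fun b hb _ ψ => ?_⟩
    subst hn
    simp only [UnitAddTorus.mFourier_zero, lapl, ContinuousMap.one_apply]
    rw [integral_smul_const, lapl_exp_int hb]
    have hb' : (b : ℂ) ≠ 0 := by exact_mod_cast hb.ne'
    have : (b : ℂ) * (b⁻¹ • (1 : ℂ)) = 1 := by
      rw [Complex.real_smul]; push_cast; field_simp
    rw [this]
    simp [hδ.le]
  · have hs := hω n hn
    rw [mFourier_integral hs]
    set s := ∑ i, ω i * (n i : ℝ) with hsdef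
    refine ⟨δ * |s|, mul_pos hδ (abs_pos.2 hs), fun b hb hb0 ψ => ?_⟩
    have h1 : ∀ τ : ℝ, Real.exp (-b * τ) • UnitAddTorus.mFourier n (projT (ψ - τ • ω)) =
        UnitAddTorus.mFourier n (projT ψ) * Complex.exp ((-b - Complex.I * s) * τ) := by
      intro τ
      rw [mFourier_projT, mFourier_projT, Complex.real_smul, Complex.ofReal_exp,
        ← Complex.exp_add, ← Complex.exp_add]
      congr 1
      have : ∑ i, (ψ - τ • ω) i * (n i : ℝ) = ∑ i, ψ i * (n i : ℝ) - τ * s := by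
        rw [hsdef, Finset.mul_sum, ← Finset.sum_sub_distrib]
        refine Finset.sum_congr rfl fun i _ => ?_
        simp only [Pi.sub_apply, Pi.smul_apply, smul_eq_mul]; ring
      rw [this]; push_cast; ring
    unfold lapl
    simp only [h1]
    have hre : ((-b - Complex.I * s : ℂ)).re < 0 := by simp [hb]
    rw [integral_const_mul, integral_exp_mul_complex_Ioi hre]
    have hn1 : ‖UnitAddTorus.mFourier n (projT ψ)‖ ≤ 1 := by
      have := (UnitAddTorus.mFourier n).norm_coe_le_norm (projT ψ)
      rwa [UnitAddTorus.mFourier_norm] at this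
    have hden : |s| ≤ ‖(-b - Complex.I * s : ℂ)‖ := by
      have := Complex.abs_im_le_norm (-b - Complex.I * s : ℂ)
      simpa using this
    have hspos := abs_pos.2 hs
    simp only [Complex.ofReal_zero, mul_zero, Complex.exp_zero, sub_zero, norm_mul, norm_div,
      norm_neg, norm_one, Complex.norm_real, Real.norm_of_nonneg hb.le]
    calc b * (‖UnitAddTorus.mFourier n (projT ψ)‖ * (1 / ‖(-b - Complex.I * s : ℂ)‖))
        ≤ b * (1 * (1 / |s|)) := by gcongr
      _ ≤ (δ * |s|) * (1 * (1 / |s|)) := by gcongr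
      _ = δ := by field_simp

lemma abel_add (ω : Fin d → ℝ) {G H : C(UnitAddTorus (Fin d), ℂ)} (hG : AbelProp ω G)
    (hH : AbelProp ω H) : AbelProp ω (G + H) := by
  intro δ hδ
  obtain ⟨b1, h1, hb1⟩ := hG (δ / 2) (by positivity)
  obtain ⟨b2, h2, hb2⟩ := hH (δ / 2) (by positivity)
  refine ⟨min b1 b2, by positivity, fun b hb hlt ψ => ?_⟩
  have e1 := hb1 b hb (lt_of_lt_of_le hlt (min_le_left _ _)) ψ
  have e2 := hb2 b hb (lt_of_lt_of_le hlt (min_le_right _ _)) ψ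
  have hadd := lapl_add ω hb (F := fun x => G (projT x)) (G := fun x => H (projT x))
    (G.continuous.comp projT_continuous) (H.continuous.comp projT_continuous)
    (fun ψ => G.norm_coe_le_norm _) (fun ψ => H.norm_coe_le_norm _) ψ
  simp only [ContinuousMap.add_apply]
  rw [hadd, integral_add
    (G.continuous.integrable_of_hasCompactSupport (HasCompactSupport.of_compactSpace _))
    (H.continuous.integrable_of_hasCompactSupport (HasCompactSupport.of_compactSpace _))]
  have : ∀ p q r s : ℂ, (b:ℂ) * (p + q) - (r + s) = (b * p - r) + (b * q - s) := by intros; ring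
  rw [this]
  refine (norm_add_le _ _).trans ?_
  linarith

lemma abel_smul (ω : Fin d → ℝ) {G : C(UnitAddTorus (Fin d), ℂ)} (hG : AbelProp ω G) (c : ℂ) :
    AbelProp ω (c • G) := by
  intro δ hδ
  obtain ⟨b1, h1, hb1⟩ := hG (δ / (‖c‖ + 1)) (by positivity)
  refine ⟨b1, h1, fun b hb hlt ψ => ?_⟩
  have e1 := hb1 b hb hlt ψ
  simp only [ContinuousMap.smul_apply, smul_eq_mul]
  rw [lapl_smul, integral_const_mul]
  have : ∀ p q : ℂ, (b : ℂ) * (c * p) - c * q = c * (b * p - q) := by intros; ring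
  rw [this, norm_mul]
  calc _ ≤ ‖c‖ * (δ / (‖c‖ + 1)) := by gcongr
    _ ≤ (‖c‖ + 1) * (δ / (‖c‖ + 1)) := by gcongr; linarith
    _ = δ := by field_simp

lemma abel_all (ω : Fin d → ℝ)
    (hω : ∀ ν : Fin d → ℤ, ν ≠ 0 → (∑ i, ω i * (ν i : ℝ)) ≠ 0)
    (G : C(UnitAddTorus (Fin d), ℂ)) : AbelProp ω G := by
  have hspan : ∀ P ∈ Submodule.span ℂ (Set.range (UnitAddTorus.mFourier (d := Fin d))),
      AbelProp ω P := by
    intro P hP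
    induction hP using Submodule.span_induction with
    | mem x hx => obtain ⟨n, rfl⟩ := hx; exact abel_mono ω hω n
    | zero =>
      intro δ hδ
      refine ⟨1, one_pos, fun b hb _ ψ => ?_⟩
      simp [lapl, hδ.le]
    | add x y _ _ hx hy => exact abel_add ω hx hy
    | smul c x _ hx => exact abel_smul ω hx c
  intro δ hδ
  have hmem : G ∈ (Submodule.span ℂ (Set.range (UnitAddTorus.mFourier (d := Fin d)))).topologicalClosure := by
    rw [UnitAddTorus.span_mFourier_closure_eq_top]; trivial
  obtain ⟨P, hP, hdist⟩ := Metric.mem_closure_iff.1 hmem (δ / 3) (by positivity)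
  obtain ⟨b1, h1, hb1⟩ := hspan P hP (δ / 3) (by positivity)
  refine ⟨b1, h1, fun b hb hlt ψ => ?_⟩
  have e1 := hb1 b hb hlt ψ
  have hD : ∀ x, ‖(G - P) x‖ ≤ δ / 3 := fun x =>
    ((G - P).norm_coe_le_norm x).trans (by rw [← dist_eq_norm]; exact hdist.le)
  have hadd := lapl_add ω hb (F := fun x => P (projT x)) (G := fun x => (G - P) (projT x))
    (P.continuous.comp projT_continuous) ((G - P).continuous.comp projT_continuous)
    (fun ψ => P.norm_coe_le_norm _) (fun ψ => hD _) ψ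
  have hGP : ∀ x, G x = P x + (G - P) x := by intro x; simp
  have hIntg : ∫ x, G x = (∫ x, P x) + ∫ x, (G - P) x := by
    rw [← integral_add
      (P.continuous.integrable_of_hasCompactSupport (HasCompactSupport.of_compactSpace _))
      ((G - P).continuous.integrable_of_hasCompactSupport (HasCompactSupport.of_compactSpace _))]
    simp
  have hlap : lapl ω b (fun x => G (projT x)) ψ = lapl ω b (fun x => P (projT x)) ψ +
      lapl ω b (fun x => (G - P) (projT x)) ψ := by
    rw [← hadd]; congr 1; ext x; exact hGP _
  rw [hIntg, hlap]
  have : ∀ p q r s : ℂ, (b:ℂ) * (p + q) - (r + s) = (b * p - r) + (b * q) + (- s) := by intros; ring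
  rw [this]
  have e2 : ‖(b : ℂ) * lapl ω b (fun x => (G - P) (projT x)) ψ‖ ≤ δ / 3 := by
    rw [norm_mul, Complex.norm_real, Real.norm_of_nonneg hb.le]
    calc _ ≤ b * (b⁻¹ * (δ / 3)) := by gcongr; exact lapl_norm_le ω hb (fun x => hD _) ψ
      _ = δ / 3 := by field_simp
  have e3 : ‖- ∫ x, (G - P) x‖ ≤ δ / 3 := by
    rw [norm_neg]
    have := norm_integral_le_of_norm_le_const (μ := (volume : Measure (UnitAddTorus (Fin d))))
      (ae_of_all _ hD)
    simpa using this
  refine (norm_add₃_le).trans ?_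
  linarith

lemma projT_quot : IsOpenQuotientMap (projT (d := d)) := by
  have h1 : IsOpenQuotientMap (fun x : ℝ => ((x / (2 * Real.pi) : ℝ) : UnitAddCircle)) := by
    have h2 : IsOpenQuotientMap (fun x : ℝ => (x : UnitAddCircle)) :=
      QuotientAddGroup.isOpenQuotientMap_mk
    have hp : (2 * Real.pi) ≠ 0 := by positivity
    have h3 := h2.comp (Homeomorph.mulRight₀ (2 * Real.pi)⁻¹ (inv_ne_zero hp)).isOpenQuotientMap
    exact h3
  exact IsOpenQuotientMap.piMap (fun _ => h1)

open scoped Pointwise in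
lemma abel_real (ω : Fin d → ℝ)
    (hω : ∀ ν : Fin d → ℤ, ν ≠ 0 → (∑ i, ω i * (ν i : ℝ)) ≠ 0) {f : (Fin d → ℝ) → ℝ}
    (hf : Continuous f)
    (hfper : ∀ (ψ : Fin d → ℝ) (i : Fin d), f (ψ + Pi.single i (2 * Real.pi)) = f ψ)
    {f₀ : ℝ} (hf₀ : f₀ = ((2 * Real.pi) ^ d)⁻¹ *
      ∫ ψ in Set.Icc (0 : Fin d → ℝ) (fun _ => 2 * Real.pi), f ψ) {δ : ℝ} (hδ : 0 < δ) :
    ∃ b₀ > 0, ∀ b, 0 < b → b < b₀ → ∀ ψ, |b * lapl ω b (fun x => f x - f₀) ψ| ≤ δ := by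
  have hpi : (2 * Real.pi) ≠ 0 := by positivity
  have hfac : ∀ x y, projT x = projT y → f x = f y := by
    intro x y hxy
    have : ∀ i, ∃ m : ℤ, y i = x i + m * (2 * Real.pi) := by
      intro i
      have h1 := congrFun hxy i
      simp only [projT] at h1
      rw [eq_comm, ← sub_eq_zero, ← AddCircle.coe_sub, AddCircle.coe_eq_zero_iff] at h1
      obtain ⟨m, hm⟩ := h1
      refine ⟨m, ?_⟩
      rw [zsmul_eq_mul, mul_one] at hm
      rw [hm]
      field_simp
      ring
    choose m hm using this
    rw [← per_lattice hfper m x]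
    congr 1
    ext i; simp [hm i]
  let prC : C(Fin d → ℝ, UnitAddTorus (Fin d)) := ⟨projT, projT_continuous⟩
  have hquot : Topology.IsQuotientMap prC := (projT_quot (d := d)).isQuotientMap
  let G : C(UnitAddTorus (Fin d), ℂ) := hquot.lift ⟨fun x => (f x : ℂ), by fun_prop⟩ (by
    intro x y hxy
    simp [hfac x y hxy])
  have hG : ∀ x, G (projT x) = (f x : ℂ) := fun x => by
    have := hquot.lift_comp ⟨fun x => (f x : ℂ), by fun_prop⟩ (by
      intro x y hxy
      simp [hfac x y hxy])
    exact DFunLike.congr_fun this x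
  have hIntg : ∫ x, G x = (f₀ : ℂ) := by
    rw [UnitAddTorus.integral_preimage G (fun _ => 0)]
    have h1 : ∀ x : Fin d → ℝ, G (fun i => (x i : UnitAddCircle)) = (f ((2 * Real.pi) • x) : ℂ) := by
      intro x
      rw [← hG]
      congr 1
      ext i
      simp only [projT, Pi.smul_apply, smul_eq_mul]
      congr 1
      field_simp
    simp only [h1]
    rw [integral_complex_ofReal, hf₀]
    congr 1
    have h2 := Measure.setIntegral_comp_smul_of_pos (volume : Measure (Fin d → ℝ)) f
      {x : Fin d → ℝ | ∀ i, x i ∈ Set.Ioc (0 : ℝ) (0 + 1)} (R := 2 * Real.pi) (by positivity)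
    rw [h2]
    simp only [Module.finrank_fin_fun, smul_eq_mul]
    congr 1
    have h3 : (2 * Real.pi) • {x : Fin d → ℝ | ∀ i, x i ∈ Set.Ioc (0 : ℝ) (0 + 1)} =
        Set.univ.pi (fun _ : Fin d => Set.Ioc (0 : ℝ) (2 * Real.pi)) := by
      ext x
      rw [Set.mem_smul_set_iff_inv_smul_mem₀ hpi]
      have hpp : 0 < 2 * Real.pi := by positivity
      simp only [Set.mem_ofPred_eq, Set.mem_univ_pi, Pi.smul_apply, smul_eq_mul, Set.mem_Ioc, zero_add]
      refine forall_congr' fun i => ?_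
      rw [inv_mul_le_iff₀ hpp, mul_one]
      have : 0 < (2 * Real.pi)⁻¹ := by positivity
      rw [mul_pos_iff_of_pos_left this]
    rw [h3]
    exact setIntegral_congr_set (Measure.univ_pi_Ioc_ae_eq_Icc)
  obtain ⟨b₀, hb₀, hb⟩ := abel_all ω hω G δ hδ
  refine ⟨b₀, hb₀, fun b hbp hlt ψ => ?_⟩
  have h := hb b hbp hlt ψ
  obtain ⟨C, hC⟩ := per_bdd hf hfper
  have h4 : lapl ω b (fun x => G (projT x)) ψ = ((lapl ω b f ψ : ℝ) : ℂ) := by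
    unfold lapl
    rw [← integral_complex_ofReal]
    congr 1
    ext τ
    simp only [hG, Complex.real_smul, smul_eq_mul]; push_cast; rfl
  have h5 : lapl ω b (fun x => f x - f₀) ψ = lapl ω b f ψ + b⁻¹ * (-f₀) := by
    have := lapl_add ω hbp (F := f) (G := fun _ => -f₀) hf continuous_const hC (fun _ => le_rfl) ψ
    simp only [sub_eq_add_neg, this]
    congr 1
    unfold lapl
    rw [integral_smul_const, lapl_exp_int hbp, smul_eq_mul]
  rw [h4, hIntg, ← Complex.ofReal_mul, ← Complex.ofReal_sub, Complex.norm_real, Real.norm_eq_abs] at h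
  rw [h5]
  convert h using 2
  field_simp
  ring

end abel
section transl
variable {d : ℕ}

/-- uniformly good expansion at a point -/
def GoodAt (f : (Fin d → ℝ) → ℝ) (r : NNReal) (C : ℝ) (ψ : Fin d → ℝ) : Prop :=
  ∃ p : FormalMultilinearSeries ℝ (Fin d → ℝ) ℝ, HasFPowerSeriesOnBall f p ψ r ∧
    ∀ n, ‖p n‖ * (r : ℝ) ^ n ≤ C

lemma GoodAt.mono {f : (Fin d → ℝ) → ℝ} {r r' : NNReal} {C C' : ℝ} {ψ : Fin d → ℝ}
    (h : GoodAt f r C ψ) (hr : 0 < r') (hrr : r' ≤ r) (hC : C ≤ C') : GoodAt f r' C' ψ := by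
  obtain ⟨p, hp, hb⟩ := h
  refine ⟨p, hp.mono (by exact_mod_cast hr) (by exact_mod_cast hrr), fun n => ?_⟩
  have hrr' : (r' : ℝ) ≤ r := by exact_mod_cast hrr
  calc ‖p n‖ * (r' : ℝ) ^ n ≤ ‖p n‖ * (r : ℝ) ^ n := by gcongr
    _ ≤ C := hb n
    _ ≤ C' := hC

lemma good_local {f : (Fin d → ℝ) → ℝ} {ψ₀ : Fin d → ℝ} (hf : AnalyticAt ℝ f ψ₀) :
    ∃ r : NNReal, 0 < r ∧ ∃ C, ∀ ψ ∈ Metric.ball ψ₀ r, GoodAt f r C ψ := by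
  obtain ⟨p, R, hp⟩ := hf
  obtain ⟨ρ, hρ0, hρ⟩ := ENNReal.lt_iff_exists_nnreal_btwn.1 hp.r_pos
  have hρ0' : 0 < ρ := by exact_mod_cast hρ0
  set r : NNReal := ρ / 2 with hr
  have hrpos : 0 < r := by positivity
  have hrr : r + r = ρ := by rw [hr]; exact add_halves ρ
  have hrad : (r : ENNReal) + r < p.radius := by
    rw [← ENNReal.coe_add, hrr]; exact lt_of_lt_of_le hρ hp.r_le
  have hsum := p.changeOriginSeries_summable_aux₁ hrad
  refine ⟨r, hrpos, ((∑' s : Σ k l : ℕ, { s : Finset (Fin (k + l)) // s.card = l },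
    ‖p (s.1 + s.2.1)‖₊ * r ^ s.2.1 * r ^ s.1 : NNReal) : ℝ), fun ψ hψ => ?_⟩
  set y := ψ - ψ₀ with hy
  have hyr : ‖y‖₊ < r := by
    rw [← NNReal.coe_lt_coe, coe_nnnorm, hy, ← dist_eq_norm]; exact hψ
  have hyr' : (‖y‖₊ : ENNReal) < r := by exact_mod_cast hyr
  have hrR : (r : ENNReal) + r < R := by rw [← ENNReal.coe_add, hrr]; exact hρ
  have hyR : (‖y‖₊ : ENNReal) < R := hyr'.trans_le (le_self_add.trans hrR.le)
  have hc := hp.changeOrigin hyR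
  have hψy : ψ₀ + y = ψ := by rw [hy]; abel
  rw [hψy] at hc
  refine ⟨p.changeOrigin y, hc.mono (by exact_mod_cast hrpos) ?_, fun n => ?_⟩
  · refine ENNReal.le_sub_of_add_le_right ENNReal.coe_ne_top ?_
    exact (add_le_add_right hyr'.le _).trans hrR.le
  · have h1 := p.nnnorm_changeOrigin_le n (x := y) (hyR.trans_le hp.r_le)
    have hs2 : Summable (fun s : Σ l : ℕ, { s : Finset (Fin (n + l)) // s.card = l } =>
        ‖p (n + s.1)‖₊ * r ^ s.1) :=
      p.changeOriginSeries_summable_aux₂ (lt_of_le_of_lt le_self_add hrad) n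
    have h2 : ‖p.changeOrigin y n‖₊ ≤ ∑' s : Σ l : ℕ, { s : Finset (Fin (n + l)) // s.card = l },
        ‖p (n + s.1)‖₊ * r ^ s.1 := by
      refine h1.trans (Summable.tsum_le_tsum (fun s => by gcongr) ?_ hs2)
      exact p.changeOriginSeries_summable_aux₂ (hyR.trans_le hp.r_le) n
    have h3 : ‖p.changeOrigin y n‖₊ * r ^ n ≤
        ∑' s : Σ k l : ℕ, { s : Finset (Fin (k + l)) // s.card = l },
          ‖p (s.1 + s.2.1)‖₊ * r ^ s.2.1 * r ^ s.1 := by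
      calc _ ≤ (∑' s : Σ l : ℕ, { s : Finset (Fin (n + l)) // s.card = l },
            ‖p (n + s.1)‖₊ * r ^ s.1) * r ^ n := by gcongr
        _ = ∑' s : Σ l : ℕ, { s : Finset (Fin (n + l)) // s.card = l },
            ‖p (n + s.1)‖₊ * r ^ s.1 * r ^ n := by rw [NNReal.tsum_mul_right]
        _ ≤ _ := NNReal.tsum_comp_le_tsum_of_inj hsum (i := fun s => ⟨n, s⟩)
            (fun s t hst => by simpa using hst)
    exact_mod_cast h3

lemma good_unif {f : (Fin d → ℝ) → ℝ} (hf : ∀ ψ, AnalyticAt ℝ f ψ)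
    (hfper : ∀ (ψ : Fin d → ℝ) (i : Fin d), f (ψ + Pi.single i (2 * Real.pi)) = f ψ) :
    ∃ r : NNReal, 0 < r ∧ ∃ C, ∀ ψ, GoodAt f r C ψ := by
  have hK : ∃ r : NNReal, 0 < r ∧ ∃ C, ∀ ψ ∈ Set.Icc (0 : Fin d → ℝ) (fun _ => 2 * Real.pi),
      GoodAt f r C ψ := by
    refine isCompact_Icc.induction_on (p := fun s => ∃ r : NNReal, 0 < r ∧ ∃ C, ∀ ψ ∈ s,
      GoodAt f r C ψ) ⟨1, one_pos, 0, by simp⟩ ?_ ?_ ?_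
    · rintro s t hst ⟨r, hr, C, h⟩
      exact ⟨r, hr, C, fun ψ hψ => h ψ (hst hψ)⟩
    · rintro s t ⟨r, hr, C, h⟩ ⟨r', hr', C', h'⟩
      refine ⟨min r r', lt_min hr hr', max C C', ?_⟩
      rintro ψ (hψ | hψ)
      · exact (h ψ hψ).mono (lt_min hr hr') (min_le_left _ _) (le_max_left _ _)
      · exact (h' ψ hψ).mono (lt_min hr hr') (min_le_right _ _) (le_max_right _ _)
    · intro ψ _
      obtain ⟨r, hr, C, h⟩ := good_local (hf ψ)
      exact ⟨_, mem_nhdsWithin_of_mem_nhds (Metric.ball_mem_nhds ψ (by exact_mod_cast hr)), r, hr, C, h⟩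
  obtain ⟨r, hr, C, h⟩ := hK
  refine ⟨r, hr, C, fun ψ => ?_⟩
  obtain ⟨n, hn⟩ := per_reduce ψ
  obtain ⟨p, hp, hb⟩ := h _ hn
  refine ⟨p, ⟨hp.r_le, hp.r_pos, fun {y} hy => ?_⟩, hb⟩
  have := hp.hasSum hy
  rwa [add_right_comm, per_lattice hfper n (ψ + y)] at this

lemma trans_analytic {f : (Fin d → ℝ) → ℝ} (hf : ∀ ψ, AnalyticAt ℝ f ψ)
    (hfper : ∀ (ψ : Fin d → ℝ) (i : Fin d), f (ψ + Pi.single i (2 * Real.pi)) = f ψ)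
    (fB : (Fin d → ℝ) →ᵇ ℝ) (hfB : ∀ ψ, fB ψ = f ψ) :
    AnalyticAt ℝ (fun η => transB η fB) 0 := by
  obtain ⟨r, hr, C, h⟩ := good_unif hf hfper
  choose p hp hb using h
  have hr' : (0 : ℝ) < r := by exact_mod_cast hr
  have hC : 0 ≤ C := le_trans (by positivity) (hb 0 0)
  have hcd : ContDiff ℝ ⊤ f := by
    rw [contDiff_iff_contDiffAt]; exact fun ψ => (hf ψ).contDiffAt
  have hbound : ∀ (n : ℕ) (v : Fin n → Fin d → ℝ) (ψ : Fin d → ℝ),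
      ‖((n.factorial : ℝ))⁻¹ * iteratedFDeriv ℝ n f ψ v‖ ≤ (C / r ^ n) * ∏ i, ‖v i‖ := by
    intro n v ψ
    rw [(hp ψ).iteratedFDeriv_eq_sum_of_completeSpace, norm_mul, norm_inv]
    have h1 : ‖∑ σ : Equiv.Perm (Fin n), p ψ n fun i => v (σ i)‖ ≤
        (n.factorial : ℝ) * ((C / r ^ n) * ∏ i, ‖v i‖) := by
      refine (norm_sum_le _ _).trans ?_
      have h2 : ∀ σ ∈ (Finset.univ : Finset (Equiv.Perm (Fin n))),
          ‖p ψ n fun i => v (σ i)‖ ≤ (C / r ^ n) * ∏ i, ‖v i‖ := by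
        intro σ _
        refine ((p ψ n).le_opNorm _).trans ?_
        rw [Equiv.prod_comp σ (fun i => ‖v i‖)]
        gcongr
        rw [le_div_iff₀ (by positivity)]
        exact hb ψ n
      refine (Finset.sum_le_sum h2).trans ?_
      rw [Finset.sum_const, Finset.card_univ, Fintype.card_perm, Fintype.card_fin, nsmul_eq_mul]
    have hn : (0 : ℝ) < n.factorial := by positivity
    rw [Real.norm_of_nonneg hn.le]
    rw [inv_mul_le_iff₀ hn]
    exact h1
  let P : FormalMultilinearSeries ℝ (Fin d → ℝ) ((Fin d → ℝ) →ᵇ ℝ) := fun n =>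
    MultilinearMap.mkContinuous
      { toFun := fun v => BoundedContinuousFunction.ofNormedAddCommGroup
          (fun ψ => ((n.factorial : ℝ))⁻¹ * iteratedFDeriv ℝ n f ψ v)
          (by
            have := hcd.continuous_iteratedFDeriv (m := n) (by exact_mod_cast le_top)
            exact continuous_const.mul ((ContinuousMultilinearMap.apply ℝ _ ℝ v).continuous.comp this))
          _ (hbound n v)
        map_update_add' := fun m i x y => by
          ext ψ
          simp [mul_add]
        map_update_smul' := fun m i c x => by
          ext ψ
          simp
          ring } (C / r ^ n)
      (fun v => by
        refine (BoundedContinuousFunction.norm_le (by positivity)).2 ?_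
        exact hbound n v)
  have hPn : ∀ n, ‖P n‖ ≤ C / r ^ n := fun n =>
    MultilinearMap.mkContinuous_norm_le _ (by positivity) _
  have hPapp : ∀ n y ψ, P n (fun _ => y) ψ = p ψ n (fun _ => y) := by
    intro n y ψ
    change ((n.factorial : ℝ))⁻¹ * iteratedFDeriv ℝ n f ψ (fun _ => y) = _
    rw [← (hp ψ).factorial_smul y n, nsmul_eq_mul]
    have hn : (n.factorial : ℝ) ≠ 0 := by positivity
    field_simp
  refine ⟨P, r, ?_, by exact_mod_cast hr, ?_⟩
  · refine P.le_radius_of_bound C fun n => ?_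
    have := hPn n
    rwa [le_div_iff₀ (by positivity)] at this
  · intro y hy
    have hyr : ‖y‖ < r := by
      rw [Metric.mem_eball, edist_zero_right] at hy
      have : ‖y‖₊ < r := by exact_mod_cast hy
      exact_mod_cast this
    have hS : Summable (fun n => P n (fun _ => y)) := by
      refine Summable.of_norm_bounded (g := fun n => C * (‖y‖ / r) ^ n)
        ((summable_geometric_of_lt_one (by positivity) ((div_lt_one hr').2 hyr)).mul_left C) fun n => ?_
      refine ((P n).le_opNorm _).trans ?_
      simp only [Finset.prod_const, Finset.card_univ, Fintype.card_fin]
      calc ‖P n‖ * ‖y‖ ^ n ≤ C / r ^ n * ‖y‖ ^ n := by gcongr; exact hPn n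
        _ = C * (‖y‖ / r) ^ n := by rw [div_pow]; ring
    have hSum := hS.hasSum
    suffices hval : transB (0 + y) fB = ∑' n, P n (fun _ => y) by
      rw [hval]; exact hSum
    refine BoundedContinuousFunction.ext fun ψ => ?_
    have h1 := (BoundedContinuousFunction.evalCLM ℝ ψ : ((Fin d → ℝ) →ᵇ ℝ) →L[ℝ] ℝ).hasSum hSum
    have h2 := (hp ψ).hasSum hy
    rw [transB_apply, hfB, zero_add]
    refine h2.unique ?_
    have h3 : (fun n => p ψ n fun _ => y) = fun n => P n (fun _ => y) ψ :=
      funext fun n => (hPapp n y ψ).symm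
    rw [h3]
    exact h1

end transl
section fixp
variable {d : ℕ}

lemma scalar_setup {g : ℝ → ℝ} {c₀ : ℝ} (hg : AnalyticAt ℝ g c₀) (hpos : 0 < deriv g c₀) :
    ∃ r > (0 : ℝ), (∀ u v : ℝ, |u| ≤ r → |v| ≤ r →
      |(g (c₀ + u) - g c₀ - deriv g c₀ * u) - (g (c₀ + v) - g c₀ - deriv g c₀ * v)|
        ≤ deriv g c₀ / 4 * |u - v|) ∧
      ∃ (p : FormalMultilinearSeries ℝ ℝ ℝ) (R : ENNReal),
        HasFPowerSeriesOnBall (fun u => g (c₀ + u) - g c₀ - deriv g c₀ * u) p 0 R ∧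
        ENNReal.ofReal r < R := by
  have hs := hg.hasStrictDerivAt.hasStrictFDerivAt.isLittleO.def (c := deriv g c₀ / 4) (by positivity)
  rw [Metric.eventually_nhds_iff] at hs
  obtain ⟨r1, hr1, h1⟩ := hs
  have hq : AnalyticAt ℝ (fun u => g (c₀ + u) - g c₀ - deriv g c₀ * u) 0 := by
    have hg' : AnalyticAt ℝ g (c₀ + 0) := by simpa using hg
    have h2 : AnalyticAt ℝ (fun u => g (c₀ + u)) 0 :=
      hg'.fun_comp (f := fun u => c₀ + u) (by fun_prop)
    fun_prop
  obtain ⟨p, R, hp⟩ := hq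
  obtain ⟨ρ, hρ0, hρ⟩ := ENNReal.lt_iff_exists_nnreal_btwn.1 hp.r_pos
  have hρ0' : (0 : ℝ) < ρ := by exact_mod_cast hρ0
  refine ⟨min (r1 / 2) ρ, by positivity, ?_, p, R, hp, ?_⟩
  · intro u v hu hv
    have h2 : dist (c₀ + u, c₀ + v) (c₀, c₀) < r1 := by
      rw [Prod.dist_eq]
      have := min_le_left (r1 / 2) (ρ : ℝ)
      simp only [dist_self_add_left, Real.norm_eq_abs]
      refine max_lt ?_ ?_ <;> linarith
    have h3 := h1 h2
    simp only [Real.norm_eq_abs, ContinuousLinearMap.toSpanSingleton_apply, smul_eq_mul] at h3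
    have e1 : c₀ + u - (c₀ + v) = u - v := by ring
    rw [e1] at h3
    convert h3 using 2
    ring
  · refine lt_of_le_of_lt ?_ hρ
    rw [← ENNReal.ofReal_coe_nnreal]
    exact ENNReal.ofReal_le_ofReal (min_le_right _ _)

lemma comp_analytic {q q' : ℝ → ℝ} {p : FormalMultilinearSeries ℝ ℝ ℝ} {R : ENNReal} {r : ℝ}
    (hp : HasFPowerSeriesOnBall q p 0 R) (hr : 0 < r) (hrR : ENNReal.ofReal r < R) {K : NNReal}
    (hq : LipschitzWith K q') (heq : ∀ u, |u| ≤ r → q' u = q u) (x : (Fin d → ℝ) →ᵇ ℝ)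
    (hx : ‖x‖ < r) : AnalyticAt ℝ (fun x : (Fin d → ℝ) →ᵇ ℝ => x.comp q' hq) x := by
  let P := FormalMultilinearSeries.ofScalars ((Fin d → ℝ) →ᵇ ℝ) p.coeff
  have hrn : ((r.toNNReal : NNReal) : ENNReal) < p.radius := lt_of_lt_of_le hrR hp.r_le
  obtain ⟨C, hC, hb⟩ := p.norm_mul_pow_le_of_lt_radius hrn
  rw [Real.coe_toNNReal _ hr.le] at hb
  have hrad : ENNReal.ofReal r ≤ P.radius := by
    refine P.le_radius_of_bound (max C ‖P 0‖) fun n => ?_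
    rcases Nat.eq_zero_or_pos n with rfl | hn
    · simp
    · refine le_trans ?_ (le_max_left _ _)
      refine le_trans ?_ (hb n)
      rw [Real.coe_toNNReal _ hr.le, FormalMultilinearSeries.norm_apply_eq_norm_coef]
      gcongr
      exact FormalMultilinearSeries.ofScalars_norm_le _ _ n hn
  have hball : HasFPowerSeriesOnBall (fun x : (Fin d → ℝ) →ᵇ ℝ => x.comp q' hq) P 0
      (ENNReal.ofReal r) := by
    refine ⟨hrad, ENNReal.ofReal_pos.2 hr, fun {y} hy => ?_⟩
    have hSum := P.hasSum (Metric.eball_subset_eball hrad hy)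
    have hyr : ‖y‖ < r := by
      rw [Metric.mem_eball, edist_zero_right, ← ofReal_norm] at hy
      exact (ENNReal.ofReal_lt_ofReal_iff hr).1 hy
    suffices hval : (0 + y).comp q' hq = P.sum y by
      rw [hval]; exact hSum
    refine BoundedContinuousFunction.ext fun ψ => ?_
    have h1 := (BoundedContinuousFunction.evalCLM ℝ ψ : ((Fin d → ℝ) →ᵇ ℝ) →L[ℝ] ℝ).hasSum hSum
    have hyψ : |y ψ| < r := lt_of_le_of_lt (y.norm_coe_le_norm ψ) hyr
    have h2 := hp.hasSum (y := y ψ) (by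
      rw [Metric.mem_eball, edist_zero_right, ← ofReal_norm]
      exact lt_of_le_of_lt (ENNReal.ofReal_le_ofReal hyψ.le) hrR)
    have h3 : (fun n => p n fun _ => y ψ) = fun n => P n (fun _ => y) ψ := by
      ext n
      simp only [P, FormalMultilinearSeries.ofScalars_apply_eq]
      rw [FormalMultilinearSeries.apply_eq_pow_smul_coeff]
      simp [mul_comm]
    rw [h3] at h2
    have h4 := h2.unique h1
    change q' ((0 + y) ψ) = _
    rw [zero_add, heq _ hyψ.le]
    rw [zero_add] at h4
    exact h4
  refine hball.analyticAt_of_mem ?_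
  rw [Metric.mem_eball, edist_zero_right, ← ofReal_norm]
  exact (ENNReal.ofReal_lt_ofReal_iff hr).2 hx

lemma implicit_analytic {V E : Type*} [NormedAddCommGroup V] [NormedSpace ℝ V]
    [NormedAddCommGroup E] [NormedSpace ℝ E] [CompleteSpace E]
    (N : E → E) (hN : ∀ x y, ‖N x - N y‖ ≤ 1 / 4 * ‖x - y‖) (F X : V → E)
    (hF : AnalyticAt ℝ F 0) (hX : ∀ η, X η + N (X η) = F η) (hNa : AnalyticAt ℝ N (X 0)) :
    AnalyticAt ℝ X 0 := by
  set P : E → E := fun x => x + N x with hP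
  have hPa : AnalyticAt ℝ P (X 0) := analyticAt_id.add hNa
  set D := fderiv ℝ N (X 0) with hD
  have hNd : HasFDerivAt N D (X 0) := hNa.differentiableAt.hasFDerivAt
  have hDn : ‖D‖ ≤ 1 / 4 := hNd.le_of_lip' (by norm_num) (Eventually.of_forall fun x => hN x _)
  have hlt : ‖-D‖ < 1 := by rw [norm_neg]; linarith
  let i : E ≃L[ℝ] E := ContinuousLinearEquiv.unitsEquiv ℝ E (Units.oneSub (-D) hlt)
  have hi : (i : E →L[ℝ] E) = ContinuousLinearMap.id ℝ E + D := by
    ext x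
    change ((Units.oneSub (-D) hlt : (E →L[ℝ] E)ˣ) : E →L[ℝ] E) x = _
    rw [Units.val_oneSub]
    simp
  have hfd : fderiv ℝ P (X 0) = i := by
    rw [hi]
    exact ((hasFDerivAt_id _).add hNd).fderiv
  have hstrict : HasStrictFDerivAt P (i : E →L[ℝ] E) (X 0) := by
    rw [← hfd]; exact hPa.hasStrictFDerivAt
  let e := hstrict.toOpenPartialHomeomorph P
  have hesymm : AnalyticAt ℝ e.symm (e (X 0)) :=
    e.analyticAt_symm' (hstrict.mem_toOpenPartialHomeomorph_source) hPa hfd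
  have he0 : e (X 0) = F 0 := hX 0
  rw [he0] at hesymm
  have hcomp : AnalyticAt ℝ (fun η => e.symm (F η)) 0 := hesymm.comp hF
  have hcont : ContinuousAt X 0 := by
    have h1 : ∀ η, ‖X η - X 0‖ ≤ 4 / 3 * ‖F η - F 0‖ := by
      intro η
      have h2 : X η - X 0 = (F η - F 0) - (N (X η) - N (X 0)) := by
        rw [← hX η, ← hX 0]; abel
      have h3 := norm_sub_le (F η - F 0) (N (X η) - N (X 0))
      rw [← h2] at h3
      have := hN (X η) (X 0)
      linarith
    have h2 : Tendsto (fun η => 4 / 3 * ‖F η - F 0‖) (nhds 0) (nhds 0) := by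
      have := (((hF.continuousAt.sub (continuousAt_const (y := F 0))).norm).const_mul (4 / 3 : ℝ))
      have h5 : Tendsto (fun η => 4 / 3 * ‖F η - F 0‖) (nhds 0) (nhds (4 / 3 * ‖F 0 - F 0‖)) := this
      simpa using h5
    rw [ContinuousAt, tendsto_iff_norm_sub_tendsto_zero]
    exact squeeze_zero (fun _ => norm_nonneg _) h1 h2
  have hev : ∀ᶠ x in nhds (X 0), e.symm (P x) = x := hstrict.eventually_left_inverse
  have hev2 := hcont.eventually hev
  refine hcomp.congr ?_
  filter_upwards [hev2] with η hη
  rw [← hX η]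
  exact hη

end fixp
section resp
variable {d : ℕ}

lemma response_fix (ω : Fin d → ℝ) {f : (Fin d → ℝ) → ℝ} (hf : ∀ ψ, AnalyticAt ℝ f ψ)
    (hfper : ∀ (ψ : Fin d → ℝ) (i : Fin d), f (ψ + Pi.single i (2 * Real.pi)) = f ψ)
    (f₀ : ℝ) {q : ℝ → ℝ} {p : FormalMultilinearSeries ℝ ℝ ℝ} {R : ENNReal} {r k a b σ : ℝ}
    (hp : HasFPowerSeriesOnBall q p 0 R) (hr : 0 < r) (hrR : ENNReal.ofReal r < R)
    (hk : 0 < k) (hlip : ∀ u v : ℝ, |u| ≤ r → |v| ≤ r → |q u - q v| ≤ k / 4 * |u - v|)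
    (hq0 : q 0 = 0) (ha : 0 < a) (hb : 0 < b) (hab : a * b = k) (hσ : 0 < σ) (hσr : 2 * σ < r)
    (hres : ∀ ψ, |lapl ω b (fun x => f x - f₀) ψ| ≤ a * σ) :
    ∃ X : (Fin d → ℝ) → ℝ, (∀ ψ, AnalyticAt ℝ X ψ) ∧
      (∀ (ψ : Fin d → ℝ) (i : Fin d), X (ψ + Pi.single i (2 * Real.pi)) = X ψ) ∧
      (∀ ψ, |X ψ| ≤ 2 * σ) ∧
      ∃ V A : ℝ → ℝ, (∀ t, HasDerivAt (fun s : ℝ => X (s • ω)) (V t) t) ∧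
        (∀ t, HasDerivAt V (A t) t) ∧
        (∀ t, A t + (a + b) * V t + a * b * X (t • ω) = f (t • ω) - f₀ - q (X (t • ω))) ∧
        (∀ t, |V t| ≤ 4 * (a * σ)) := by
  have hfc : Continuous f := continuous_iff_continuousAt.2 fun ψ => (hf ψ).continuousAt
  obtain ⟨C, hC⟩ := per_bdd hfc hfper
  let fB : (Fin d → ℝ) →ᵇ ℝ := BoundedContinuousFunction.ofNormedAddCommGroup
    (fun ψ => f ψ - f₀) (by fun_prop) (C + ‖f₀‖)
    (fun ψ => (norm_sub_le _ _).trans (by linarith [hC ψ]))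
  have hfB : ∀ ψ, fB ψ = f ψ - f₀ := fun ψ => rfl
  -- the truncated nonlinearity
  set q' : ℝ → ℝ := fun u => q (Set.projIcc (-r) r (by linarith) u) with hq'
  have hlip' : LipschitzWith (k / 4).toNNReal q' := by
    refine LipschitzWith.of_dist_le_mul fun u v => ?_
    rw [Real.coe_toNNReal _ (by positivity), Real.dist_eq, Real.dist_eq]
    have h1 := (LipschitzWith.projIcc (a := -r) (b := r) (by linarith)).dist_le_mul u v
    rw [Subtype.dist_eq, Real.dist_eq, Real.dist_eq, NNReal.coe_one, one_mul] at h1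
    refine (hlip _ _ (abs_le.2 (Set.projIcc (-r) r (by linarith) u).2)
      (abs_le.2 (Set.projIcc (-r) r (by linarith) v).2)).trans ?_
    gcongr
  have heq : ∀ u, |u| ≤ r → q' u = q u := by
    intro u hu
    simp only [hq']
    rw [Set.projIcc_of_mem (by linarith) (abs_le.1 hu)]
  have hcompl : ∀ x y : (Fin d → ℝ) →ᵇ ℝ, ‖x.comp q' hlip' - y.comp q' hlip'‖ ≤ k / 4 * ‖x - y‖ := by
    intro x y
    refine (BoundedContinuousFunction.norm_le (by positivity)).2 fun ψ => ?_
    have h1 := hlip'.dist_le_mul (x ψ) (y ψ)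
    rw [Real.coe_toNNReal _ (by positivity), Real.dist_eq, Real.dist_eq] at h1
    change |q' (x ψ) - q' (y ψ)| ≤ _
    refine h1.trans ?_
    gcongr
    exact (x - y).norm_coe_le_norm ψ
  set T : ((Fin d → ℝ) →ᵇ ℝ) →L[ℝ] ((Fin d → ℝ) →ᵇ ℝ) := (resB ω a ha).comp (resB ω b hb) with hT
  have hTn : ∀ x, ‖T x‖ ≤ k⁻¹ * ‖x‖ := by
    intro x
    refine (resB_norm ω a ha _).trans ?_
    rw [← hab, mul_inv, mul_assoc]
    gcongr
    exact resB_norm ω b hb x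
  set N : ((Fin d → ℝ) →ᵇ ℝ) → ((Fin d → ℝ) →ᵇ ℝ) := fun x => T (x.comp q' hlip') with hN
  have hNlip : ∀ x y, ‖N x - N y‖ ≤ 1 / 4 * ‖x - y‖ := by
    intro x y
    simp only [hN]
    rw [← map_sub]
    refine (hTn _).trans ?_
    calc k⁻¹ * _ ≤ k⁻¹ * (k / 4 * ‖x - y‖) := by gcongr; exact hcompl x y
      _ = 1 / 4 * ‖x - y‖ := by field_simp
  have hΦ : ContractingWith (1 / 4) (fun x => T fB - N x) := by
    refine ⟨by rw [← NNReal.coe_lt_coe]; norm_num, LipschitzWith.of_dist_le_mul fun x y => ?_⟩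
    rw [dist_eq_norm, dist_eq_norm]
    have h1 := hNlip y x
    have e1 : T fB - N x - (T fB - N y) = N y - N x := by abel
    rw [e1, norm_sub_rev x y]
    simpa using h1
  set X := ContractingWith.fixedPoint _ hΦ with hX
  have hfix : X + N X = T fB := by
    have := hΦ.fixedPoint_isFixedPt
    rw [Function.IsFixedPt, ← hX] at this
    nth_rewrite 1 [← this]; abel
  have hN0 : N 0 = 0 := by
    have : (0 : (Fin d → ℝ) →ᵇ ℝ).comp q' hlip' = 0 := by
      ext ψ
      change q' 0 = 0
      rw [heq 0 (by simpa using hr.le), hq0]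
    simp only [hN, this, map_zero]
  have hTf : ‖T fB‖ ≤ σ := by
    have h1 : ‖resB ω b hb fB‖ ≤ a * σ :=
      (BoundedContinuousFunction.norm_le (by positivity)).2 hres
    refine (resB_norm ω a ha _).trans ?_
    calc a⁻¹ * ‖resB ω b hb fB‖ ≤ a⁻¹ * (a * σ) := by gcongr
      _ = σ := by field_simp
  have hXn : ‖X‖ ≤ 2 * σ := by
    have h1 : X = T fB - N X := by rw [← hfix]; abel
    have h2 := norm_sub_le (T fB) (N X)
    rw [← h1] at h2
    have h3 := hNlip X 0
    rw [hN0, sub_zero, sub_zero] at h3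
    linarith
  have hXψ : ∀ ψ, |X ψ| ≤ 2 * σ := fun ψ => (X.norm_coe_le_norm ψ).trans hXn
  have hTtr : ∀ η x, T (transB η x) = transB η (T x) := by
    intro η x
    simp only [hT, ContinuousLinearMap.comp_apply, resB_transB]
  have htr : ∀ η, transB η X + N (transB η X) = T (transB η fB) := by
    intro η
    have h1 : N (transB η X) = transB η (N X) := hTtr η (X.comp q' hlip')
    rw [h1, hTtr, ← hfix]
    rfl
  have htr0 : transB 0 X = X := by ext ψ; rw [transB_apply, add_zero]
  have hXa : AnalyticAt ℝ (fun η => transB η X) 0 := by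
    refine implicit_analytic N hNlip (fun η => T (transB η fB)) (fun η => transB η X) ?_ htr ?_
    · refine (T.analyticAt _).comp ?_
      refine trans_analytic (f := fun ψ => f ψ - f₀) (fun ψ => (hf ψ).sub analyticAt_const)
        (fun ψ i => by rw [hfper]) fB hfB
    · simp only [htr0]
      exact (T.analyticAt _).comp (comp_analytic hp hr hrR hlip' heq X (lt_of_le_of_lt hXn hσr))
  have hper : ∀ (ψ : Fin d → ℝ) (i : Fin d), X (ψ + Pi.single i (2 * Real.pi)) = X ψ := by
    intro ψ i
    have h1 : transB (Pi.single i (2 * Real.pi)) fB = fB := by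
      ext ψ; rw [transB_apply, hfB, hfB, hfper]
    have h2 := htr (Pi.single i (2 * Real.pi))
    rw [h1] at h2
    have h3 : Function.IsFixedPt (fun x => T fB - N x) (transB (Pi.single i (2 * Real.pi)) X) := by
      rw [Function.IsFixedPt, ← h2]; abel
    have h4 := hΦ.fixedPoint_unique h3
    rw [← transB_apply, h4, ← hX]
  refine ⟨X, ?_, hper, hXψ, ?_⟩
  · intro ψ₀
    have h1 : AnalyticAt ℝ (fun η => X (ψ₀ + η)) 0 :=
      ((BoundedContinuousFunction.evalCLM ℝ ψ₀ :
        ((Fin d → ℝ) →ᵇ ℝ) →L[ℝ] ℝ).analyticAt _).comp hXa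
    have h2 : AnalyticAt ℝ (fun ψ : Fin d → ℝ => ψ - ψ₀) ψ₀ := by fun_prop
    have h3 : AnalyticAt ℝ (fun η => X (ψ₀ + η)) (ψ₀ - ψ₀) := by rw [sub_self]; exact h1
    have h4 := h3.fun_comp (f := fun ψ : Fin d → ℝ => ψ - ψ₀) h2
    simpa using h4
  · set H := fB - X.comp q' hlip' with hH
    set W := resB ω b hb H with hW
    have hXW : X = resB ω a ha W := by
      have h1 : X = T fB - N X := by rw [← hfix]; abel
      rw [h1, hW, hH]
      simp only [hN, hT, ContinuousLinearMap.comp_apply, map_sub]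
    have hdW : ∀ t : ℝ, HasDerivAt (fun s : ℝ => W (s • ω)) (H (t • ω) - b * W (t • ω)) t :=
      fun t => lapl_flow hb H.continuous H.norm_coe_le_norm t
    have hdX : ∀ t : ℝ, HasDerivAt (fun s : ℝ => X (s • ω)) (W (t • ω) - a * X (t • ω)) t := by
      intro t
      have := lapl_flow (ω := ω) ha W.continuous W.norm_coe_le_norm t
      simp only [← resB_apply ω a ha, ← hXW] at this
      exact this
    refine ⟨fun t => W (t • ω) - a * X (t • ω),
      fun t => (H (t • ω) - b * W (t • ω)) - a * (W (t • ω) - a * X (t • ω)), hdX,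
      fun t => (hdW t).sub ((hdX t).const_mul a), fun t => ?_, fun t => ?_⟩
    · have h1 : H (t • ω) = f (t • ω) - f₀ - q (X (t • ω)) := by
        change f (t • ω) - f₀ - q' (X (t • ω)) = _
        rw [heq _ ((hXψ _).trans hσr.le)]
      beta_reduce
      rw [h1]; ring
    · have hWn : ‖W‖ ≤ 3 / 2 * (a * σ) := by
        rw [hW, hH, map_sub]
        have h1 : ‖resB ω b hb fB‖ ≤ a * σ :=
          (BoundedContinuousFunction.norm_le (by positivity)).2 hres
        have h2 := hcompl X 0
        have h0 : (0 : (Fin d → ℝ) →ᵇ ℝ).comp q' hlip' = 0 := by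
          ext ψ
          change q' 0 = 0
          rw [heq 0 (by simpa using hr.le), hq0]
        rw [h0, sub_zero, sub_zero] at h2
        have h3 : ‖resB ω b hb (X.comp q' hlip')‖ ≤ 1 / 2 * (a * σ) := by
          refine (resB_norm ω b hb _).trans ?_
          calc b⁻¹ * ‖X.comp q' hlip'‖ ≤ b⁻¹ * (k / 4 * (2 * σ)) := by
                gcongr
                exact h2.trans (by gcongr)
            _ = 1 / 2 * (a * σ) := by rw [← hab]; field_simp; norm_num
        refine (norm_sub_le _ _).trans ?_
        linarith
      have h1 : |W (t • ω)| ≤ 3 / 2 * (a * σ) := (W.norm_coe_le_norm _).trans hWn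
      have h2 : |a * X (t • ω)| ≤ a * (2 * σ) := by
        rw [abs_mul, abs_of_pos ha]; gcongr; exact hXψ _
      have h3 := abs_sub (W (t • ω)) (a * X (t • ω))
      have : 0 < a * σ := by positivity
      linarith
end resp
section mainpart
variable {d : ℕ}

lemma main_eps (ω : Fin d → ℝ) (f : (Fin d → ℝ) → ℝ) (g : ℝ → ℝ)
    (hf : ∀ ψ : Fin d → ℝ, AnalyticAt ℝ f ψ)
    (hfper : ∀ (ψ : Fin d → ℝ) (i : Fin d), f (ψ + Pi.single i (2 * Real.pi)) = f ψ)
    (hg : ∀ x : ℝ, AnalyticAt ℝ g x) (f₀ c₀ : ℝ) (hzero : g c₀ = f₀)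
    {p : FormalMultilinearSeries ℝ ℝ ℝ} {R : ENNReal} {r k a b σ ε : ℝ} (hk : 0 < k)
    (hp : HasFPowerSeriesOnBall (fun u => g (c₀ + u) - g c₀ - k * u) p 0 R)
    (hr : 0 < r) (hrR : ENNReal.ofReal r < R)
    (hlip : ∀ u v : ℝ, |u| ≤ r → |v| ≤ r →
      |(g (c₀ + u) - g c₀ - k * u) - (g (c₀ + v) - g c₀ - k * v)| ≤ k / 4 * |u - v|)
    (ha : 0 < a) (hb : 0 < b) (hab : a * b = k) (h4 : 4 * b ≤ a)
    (hσ : σ = r / 100) (hres : ∀ ψ, |lapl ω b (fun x => f x - f₀) ψ| ≤ a * σ)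
    (hε : 0 < ε) (hεab : ε * (a + b) = 1) (hεk : 16 * k * ε ^ 2 < 1) :
    ∃ X : (Fin d → ℝ) → ℝ,
        (∀ ψ : Fin d → ℝ, AnalyticAt ℝ X ψ) ∧
        (∀ (ψ : Fin d → ℝ) (i : Fin d), X (ψ + Pi.single i (2 * Real.pi)) = X ψ) ∧
        (∀ t : ℝ,
          ε * deriv (deriv (fun s : ℝ => c₀ + X (s • ω))) t
            + deriv (fun s : ℝ => c₀ + X (s • ω)) t
            + ε * g (c₀ + X (t • ω))
            = ε * f (t • ω)) ∧
        ∃ U : Set (ℝ × ℝ), U ∈ nhds ((c₀, 0) : ℝ × ℝ) ∧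
          (∀ y : ℝ → ℝ, ContDiff ℝ 2 y →
            (∀ t : ℝ, ε * deriv (deriv y) t + deriv y t + ε * g (y t) = ε * f (t • ω)) →
            (y 0, deriv y 0) ∈ U →
            Tendsto
              (fun t : ℝ =>
                |y t - (c₀ + X (t • ω))| +
                |deriv y t - deriv (fun s : ℝ => c₀ + X (s • ω)) t|)
              atTop (nhds 0)) ∧
          (∀ Y : (Fin d → ℝ) → ℝ, Continuous Y →
            (∀ (ψ : Fin d → ℝ) (i : Fin d), Y (ψ + Pi.single i (2 * Real.pi)) = Y ψ) →
            (∀ t : ℝ,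
              ε * deriv (deriv (fun s : ℝ => c₀ + Y (s • ω))) t
                + deriv (fun s : ℝ => c₀ + Y (s • ω)) t
                + ε * g (c₀ + Y (t • ω))
                = ε * f (t • ω)) →
            (∀ t : ℝ,
              ((c₀ + Y (t • ω), deriv (fun s : ℝ => c₀ + Y (s • ω)) t) : ℝ × ℝ) ∈ U) →
            ∀ t : ℝ, c₀ + Y (t • ω) = c₀ + X (t • ω)) := by
  have hσ0 : 0 < σ := by rw [hσ]; positivity
  have hσr : 2 * σ < r := by rw [hσ]; linarith
  obtain ⟨X, hXa, hXper, hXb, V, A, hV, hA, hODE, hVb⟩ := response_fix ω hf hfper f₀ hp hr hrR hk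
    hlip (by simp) ha hb hab hσ0 hσr hres
  have hfc : Continuous f := continuous_iff_continuousAt.2 fun ψ => (hf ψ).continuousAt
  have hgc : Continuous g := continuous_iff_continuousAt.2 fun ψ => (hg ψ).continuousAt
  have hXc : Continuous X := continuous_iff_continuousAt.2 fun ψ => (hXa ψ).continuousAt
  have hd1 : deriv (fun s : ℝ => c₀ + X (s • ω)) = V :=
    funext fun t => ((hV t).const_add c₀).deriv
  have hd2 : deriv V = A := funext fun t => (hA t).deriv
  have hsol : ∀ t : ℝ, ε * deriv (deriv (fun s : ℝ => c₀ + X (s • ω))) t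
            + deriv (fun s : ℝ => c₀ + X (s • ω)) t
            + ε * g (c₀ + X (t • ω)) = ε * f (t • ω) := by
    intro t
    rw [hd1, hd2]
    have h1 := hODE t
    beta_reduce at h1
    linear_combination ε * h1 - V t * hεab - ε * X (t • ω) * hab + ε * hzero
  -- the auxiliary radius
  have hr1 : ∃ r₁ > 0, ∀ Y : (Fin d → ℝ) → ℝ, Continuous Y →
      (∀ (ψ : Fin d → ℝ) (i : Fin d), Y (ψ + Pi.single i (2 * Real.pi)) = Y ψ) →
      (∀ t : ℝ, ε * deriv (deriv (fun s : ℝ => c₀ + Y (s • ω))) t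
          + deriv (fun s : ℝ => c₀ + Y (s • ω)) t + ε * g (c₀ + Y (t • ω)) = ε * f (t • ω)) →
      (∀ t : ℝ, |c₀ + Y (t • ω) - c₀| < r₁ ∧ |deriv (fun s : ℝ => c₀ + Y (s • ω)) t| < r₁) →
      ∀ t : ℝ, c₀ + Y (t • ω) = c₀ + X (t • ω) := by
    by_cases hc : ∃ t₀ : ℝ, f (t₀ • ω) ≠ g c₀
    · obtain ⟨t₀, ht₀⟩ := hc
      have hF : Continuous (fun t : ℝ => f (t • ω)) := by fun_prop
      obtain ⟨r₁, hr₁, h⟩ := junk_vacuous hF hgc hε ht₀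
      exact ⟨r₁, hr₁, fun Y _ _ h1 h2 => (h _ h1 h2).elim⟩
    · push Not at hc
      have key : ∀ Y : (Fin d → ℝ) → ℝ, Continuous Y →
          (∀ (ψ : Fin d → ℝ) (i : Fin d), Y (ψ + Pi.single i (2 * Real.pi)) = Y ψ) →
          (∀ t : ℝ, ε * deriv (deriv (fun s : ℝ => c₀ + Y (s • ω))) t
          + deriv (fun s : ℝ => c₀ + Y (s • ω)) t + ε * g (c₀ + Y (t • ω)) = ε * f (t • ω)) →
          (∀ t : ℝ, |Y (t • ω)| ≤ r) → ∀ t : ℝ, Y (t • ω) = 0 := by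
        intro Y hYc hYper hYeq hYb
        have hdY : deriv (fun s : ℝ => c₀ + Y (s • ω)) = deriv (fun s : ℝ => Y (s • ω)) :=
          funext fun t => deriv_const_add c₀
        rw [hdY] at hYeq
        have h0 : |(0 : ℝ)| ≤ r := by simpa using hr.le
        have hkx : ∀ x : ℝ, 0 < x → 5 * k / 4 * x < x / (4 * ε ^ 2) := by
          intro x hx
          rw [lt_div_iff₀ (by positivity)]
          nlinarith
        refine junk_zero (u := fun t : ℝ => Y (t • ω)) (h := fun u => g (c₀ + u) - g c₀) hε
          (by fun_prop) ?_ hYb ?_ ?_ ?_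
        · intro t
          have h1 := hYeq t
          rw [hc t] at h1
          beta_reduce
          linarith
        · intro x hx hxr
          have h1 := hlip x 0 (by rwa [abs_of_pos hx]) h0
          simp only [add_zero, mul_zero, sub_self, sub_zero, abs_of_pos hx] at h1
          have h2 := abs_le.1 h1
          have h3 := hkx x hx
          have h5 : 0 < k * x := by positivity
          constructor <;> beta_reduce <;> nlinarith
        · intro x hx hxr
          have h1 := hlip (-x) 0 (by rwa [abs_neg, abs_of_pos hx]) h0
          simp only [add_zero, mul_zero, sub_self, sub_zero, abs_neg, abs_of_pos hx] at h1
          have h2 := abs_le.1 h1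
          have h3 := hkx x hx
          have h5 : 0 < k * x := by positivity
          constructor <;> beta_reduce <;> nlinarith
        · intro p δ N hδ
          exact recur ω hYc hYper p hδ N
      refine ⟨r, hr, fun Y hYc hYper hYeq hYb t => ?_⟩
      rw [key Y hYc hYper hYeq (fun t => by simpa using (hYb t).1.le) t,
        key X hXc hXper hsol (fun t => (hXb _).trans hσr.le) t]
  obtain ⟨r₁, hr₁, huniq⟩ := hr1
  refine ⟨X, hXa, hXper, hsol, ?_⟩
  let U : Set (ℝ × ℝ) := {pv | (((pv.2 - V 0) + a * (pv.1 - (c₀ + X ((0 : ℝ) • ω)))) / (a - b)) ^ 2 +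
    (((pv.2 - V 0) + b * (pv.1 - (c₀ + X ((0 : ℝ) • ω)))) / (a - b)) ^ 2 < (r / 2) ^ 2 / 2} ∩
    ({pv | |pv.1 - c₀| < r₁} ∩ {pv | |pv.2| < r₁})
  have hUo : IsOpen U := by
    refine IsOpen.inter (isOpen_lt (by fun_prop) (by fun_prop)) (IsOpen.inter ?_ ?_)
    · exact isOpen_lt (by fun_prop) (by fun_prop)
    · exact isOpen_lt (by fun_prop) (by fun_prop)
  have hamb : 0 < a - b := by linarith
  refine ⟨U, hUo.mem_nhds ⟨?_, by simpa using hr₁, by simpa using hr₁⟩, ?_, ?_⟩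
  · have e1 : ∀ m : ℝ, 0 < m → m ≤ a →
        |((0 - V 0) + m * (c₀ - (c₀ + X ((0 : ℝ) • ω)))) / (a - b)| ≤ 8 * σ := by
      intro m hm hma
      rw [abs_div, abs_of_pos hamb, div_le_iff₀ hamb]
      have h1 := hVb 0
      have h2 := hXb ((0 : ℝ) • ω)
      have h3 : |m * X ((0 : ℝ) • ω)| ≤ a * (2 * σ) := by
        rw [abs_mul, abs_of_pos hm]; gcongr
      have h5 := abs_le.1 h1
      have h6 := abs_le.1 h3
      have h7 : 6 * (a * σ) ≤ 8 * σ * (a - b) := by nlinarith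
      rw [abs_le]
      constructor <;> nlinarith
    have h1 := e1 a ha le_rfl
    have h2 := e1 b hb (by linarith)
    have h3 := sq_le_sq' (abs_le.1 h1).1 (abs_le.1 h1).2
    have h5 := sq_le_sq' (abs_le.1 h2).1 (abs_le.1 h2).2
    simp only [Set.mem_ofPred_eq]
    refine lt_of_le_of_lt (add_le_add h3 h5) ?_
    rw [hσ]
    nlinarith
  · intro y hy hyeq hyU
    have hy1 : ∀ t, HasDerivAt y (deriv y t) t := fun t =>
      (hy.differentiable (by norm_num) t).hasDerivAt
    have hy2 : ∀ t, HasDerivAt (deriv y) (deriv (deriv y) t) t := by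
      intro t
      have : ContDiff ℝ 1 (deriv y) := ContDiff.deriv' hy
      exact (this.differentiable (by norm_num) t).hasDerivAt
    rw [hd1]
    refine attract (z := fun t => y t - (c₀ + X (t • ω))) (z1 := fun t => deriv y t - V t)
      (z2 := fun t => deriv (deriv y) t - A t) (a := a) (b := b) (ρ := r / 2)
      (fun t => (hy1 t).sub ((hV t).const_add c₀)) (fun t => (hy2 t).sub (hA t)) hb h4
      (by positivity) ?_ (le_of_lt hyU.1)
    intro t hz
    beta_reduce at hz ⊢
    have h2 := hXb (t • ω)
    have h3 : |y t - c₀| ≤ r := by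
      have e : y t - c₀ = (y t - (c₀ + X (t • ω))) + X (t • ω) := by ring
      rw [e]
      refine (abs_add_le _ _).trans ?_
      rw [hσ] at h2
      linarith
    have h5 := hlip (y t - c₀) (X (t • ω)) h3 (h2.trans hσr.le)
    have e2 : c₀ + (y t - c₀) = y t := by ring
    have e3 : y t - c₀ - X (t • ω) = y t - (c₀ + X (t • ω)) := by ring
    rw [e2, e3] at h5
    rw [hab]
    refine le_trans (le_of_eq ?_) h5
    rw [← abs_neg]
    congr 1
    have h6 := hODE t
    beta_reduce at h6
    have h7 := hyeq t
    have h8 : deriv (deriv y) t + (a + b) * deriv y t + g (y t) = f (t • ω) := by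
      have : ε * (deriv (deriv y) t + (a + b) * deriv y t + g (y t)) = ε * f (t • ω) := by
        linear_combination h7 + deriv y t * hεab
      exact mul_left_cancel₀ hε.ne' this
    linear_combination h6 - h8 + hzero - X (t • ω) * hab
  · intro Y hYc hYper hYeq hYU
    exact huniq Y hYc hYper hYeq fun t => ⟨(hYU t).2.1, (hYU t).2.2⟩

end mainpart
/-- **Existence, local attractivity and uniqueness of the response solution when `g'(c₀) > 0`.**
For nonresonant `ω`, analytic periodic forcing `f` with mean `f₀`, analytic `g` with
`g(c₀) = f₀` and `g'(c₀) > 0`, for every small `ε > 0` there is a quasi-periodic solution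
`x₀(t) = c₀ + X ε (t • ω)` of `ε x'' + x' + ε g(x) = ε f(ωt)` which is locally attractive:
every solution starting in a suitable neighbourhood `U` of `(c₀, 0)` in the `(x, x')`-plane
converges to it, and `x₀` is the only quasi-periodic solution whose orbit stays in `U`. -/
theorem response_solution_attractive
    (d : ℕ) (hd : 1 ≤ d) (ω : Fin d → ℝ)
    (hω : ∀ ν : Fin d → ℤ, ν ≠ 0 → (∑ i, ω i * (ν i : ℝ)) ≠ 0)
    (f : (Fin d → ℝ) → ℝ) (g : ℝ → ℝ)
    (hf : ∀ ψ : Fin d → ℝ, AnalyticAt ℝ f ψ)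
    (hfper : ∀ (ψ : Fin d → ℝ) (i : Fin d), f (ψ + Pi.single i (2 * Real.pi)) = f ψ)
    (hg : ∀ x : ℝ, AnalyticAt ℝ g x)
    (f₀ : ℝ)
    (hf₀ : f₀ = ((2 * Real.pi) ^ d)⁻¹ *
      ∫ ψ in Set.Icc (0 : Fin d → ℝ) (fun _ => 2 * Real.pi), f ψ)
    (c₀ : ℝ) (hzero : g c₀ = f₀) (hpos : 0 < deriv g c₀) :
    ∃ ε₀ > (0 : ℝ), ∃ X : ℝ → (Fin d → ℝ) → ℝ,
      ∀ ε : ℝ, 0 < ε → ε < ε₀ →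
        (∀ ψ : Fin d → ℝ, AnalyticAt ℝ (X ε) ψ) ∧
        (∀ (ψ : Fin d → ℝ) (i : Fin d), X ε (ψ + Pi.single i (2 * Real.pi)) = X ε ψ) ∧
        (∀ t : ℝ,
          ε * deriv (deriv (fun s : ℝ => c₀ + X ε (s • ω))) t
            + deriv (fun s : ℝ => c₀ + X ε (s • ω)) t
            + ε * g (c₀ + X ε (t • ω))
            = ε * f (t • ω)) ∧
        ∃ U : Set (ℝ × ℝ), U ∈ nhds ((c₀, 0) : ℝ × ℝ) ∧
          -- local attractivity: any solution starting in `U` converges to `x₀`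
          (∀ y : ℝ → ℝ, ContDiff ℝ 2 y →
            (∀ t : ℝ, ε * deriv (deriv y) t + deriv y t + ε * g (y t) = ε * f (t • ω)) →
            (y 0, deriv y 0) ∈ U →
            Tendsto
              (fun t : ℝ =>
                |y t - (c₀ + X ε (t • ω))| +
                |deriv y t - deriv (fun s : ℝ => c₀ + X ε (s • ω)) t|)
              atTop (nhds 0)) ∧
          -- uniqueness among quasi-periodic solutions whose orbit stays in `U`
          (∀ Y : (Fin d → ℝ) → ℝ, Continuous Y →
            (∀ (ψ : Fin d → ℝ) (i : Fin d), Y (ψ + Pi.single i (2 * Real.pi)) = Y ψ) →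
            (∀ t : ℝ,
              ε * deriv (deriv (fun s : ℝ => c₀ + Y (s • ω))) t
                + deriv (fun s : ℝ => c₀ + Y (s • ω)) t
                + ε * g (c₀ + Y (t • ω))
                = ε * f (t • ω)) →
            (∀ t : ℝ,
              ((c₀ + Y (t • ω), deriv (fun s : ℝ => c₀ + Y (s • ω)) t) : ℝ × ℝ) ∈ U) →
            ∀ t : ℝ, c₀ + Y (t • ω) = c₀ + X ε (t • ω)) := by
  have hfc : Continuous f := continuous_iff_continuousAt.2 fun ψ => (hf ψ).continuousAt
  obtain ⟨r, hr, hlip, p, R, hp, hrR⟩ := scalar_setup (hg c₀) hpos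
  obtain ⟨b₀, hb₀, hab₀⟩ := abel_real ω hω hfc hfper hf₀
    (δ := deriv g c₀ * (r / 100)) (by positivity)
  set k := deriv g c₀ with hkdef
  have key : ∀ ε : ℝ, 0 < ε → ε < min (b₀ / (2 * k)) (min 1 (1 / (16 * k))) → ∃ a b : ℝ,
      0 < a ∧ 0 < b ∧ a * b = k ∧ 4 * b ≤ a ∧
      (∀ ψ, |lapl ω b (fun x => f x - f₀) ψ| ≤ a * (r / 100)) ∧
      ε * (a + b) = 1 ∧ 16 * k * ε ^ 2 < 1 := by
    intro ε hε hlt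
    obtain ⟨h1, h2⟩ := lt_min_iff.1 hlt
    obtain ⟨h2, h3⟩ := lt_min_iff.1 h2
    rw [lt_div_iff₀ (by positivity)] at h1 h3
    have hεk : 16 * k * ε ^ 2 < 1 := by nlinarith
    have hs0 : 0 ≤ Real.sqrt (1 - 4 * k * ε ^ 2) := Real.sqrt_nonneg _
    have hs2 : Real.sqrt (1 - 4 * k * ε ^ 2) ^ 2 = 1 - 4 * k * ε ^ 2 :=
      Real.sq_sqrt (by nlinarith [mul_pos hpos (pow_pos hε 2)])
    set s := Real.sqrt (1 - 4 * k * ε ^ 2) with hs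
    obtain ⟨a, ha'⟩ : ∃ a, a = (1 + s) / (2 * ε) := ⟨_, rfl⟩
    have hεa : 2 * (ε * a) = 1 + s := by rw [ha']; field_simp
    have ha : 0 < a := by rw [ha']; positivity
    obtain ⟨b, hb'⟩ : ∃ b, b = k / a := ⟨_, rfl⟩
    have hb : 0 < b := by rw [hb']; positivity
    have hab : a * b = k := by rw [hb']; field_simp
    have hεab : ε * (a + b) = 1 := by
      have : (ε * a) * (ε * (a + b)) = (ε * a) * 1 := by
        have e : (ε * a) * (ε * (a + b)) = (ε * a) ^ 2 + ε ^ 2 * k := by rw [← hab]; ring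
        rw [e]
        have e2 : ε * a = (1 + s) / 2 := by linarith
        rw [e2]
        nlinarith
      exact mul_left_cancel₀ (by positivity) this
    have hge : 1 ≤ 2 * (ε * a) := by linarith
    have h4 : 4 * b ≤ a := by
      have e1 : 4 * k ≤ a ^ 2 := by
        by_contra hcon
        push Not at hcon
        have : 4 * ε ^ 2 * a ^ 2 < 4 * ε ^ 2 * (4 * k) :=
          mul_lt_mul_of_pos_left hcon (by positivity)
        nlinarith
      rw [hb', ← mul_div_assoc, div_le_iff₀ ha]
      nlinarith
    have hbb : b < b₀ := by
      have : b ≤ 2 * k * ε := by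
        rw [← hab]
        nlinarith [mul_le_mul_of_nonneg_left hge hb.le]
      linarith
    have hres : ∀ ψ, |lapl ω b (fun x => f x - f₀) ψ| ≤ a * (r / 100) := by
      intro ψ
      have h := hab₀ b hb hbb ψ
      rw [abs_mul, abs_of_pos hb, ← hab] at h
      have h' : b * |lapl ω b (fun x => f x - f₀) ψ| ≤ b * (a * (r / 100)) := by linarith
      exact le_of_mul_le_mul_left h' hb
    exact ⟨a, b, ha, hb, hab, h4, hres, hεab, hεk⟩
  choose a b ha hb hab h4 hres hεab hεk using key
  have key2 := fun (ε : ℝ) (hε : 0 < ε) hlt =>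
    main_eps ω f g hf hfper hg f₀ c₀ hzero hpos hp hr hrR hlip (ha ε hε hlt) (hb ε hε hlt)
      (hab ε hε hlt) (h4 ε hε hlt) rfl (hres ε hε hlt) hε (hεab ε hε hlt) (hεk ε hε hlt)
  classical
  refine ⟨min (b₀ / (2 * k)) (min 1 (1 / (16 * k))), by positivity,
    fun ε => if h : 0 < ε ∧ ε < min (b₀ / (2 * k)) (min 1 (1 / (16 * k))) then
      (key2 ε h.1 h.2).choose else 0, ?_⟩
  intro ε hε hlt
  beta_reduce
  rw [dif_pos (And.intro hε hlt)]
  exact (key2 ε hε hlt).choose_spec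
end
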